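/- Let J : ℝ → [0,∞) be a convex function with J(0) = 0, and let g ∈ L¹(ℝⁿ) be nonnegative. Then for all pairs of nonnegative measurable functions u, v : ℝⁿ → [0,∞) such that |{u > τ}| < ∞ and |{v > τ}| < ∞ for all τ > 0 and such that ∫_{ℝⁿ}∫_{ℝⁿ} J(u(x) − v(y)) g(x−y) dx dy is finite, one has ∫_{ℝⁿ}∫_{ℝⁿ} J(u^{*n}(x) − v^{*n}(y)) g^{*n}(x−y) dx dy ≤ ∫_{ℝⁿ}∫_{ℝⁿ} J(u(x) − v(y)) g(x−y) dx dy. -/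

import Mathlib

open MeasureTheory Real

/-- For a measurable set `A ⊂ ℝⁿ` of finite Lebesgue measure, the radius of the open ball
centered at the origin with the same measure as `A`. -/
noncomputable def schwarzRadius (n : ℕ) (A : Set (EuclideanSpace ℝ (Fin n))) : ℝ :=
  ((volume A).toReal / (volume (Metric.ball (0 : EuclideanSpace ℝ (Fin n)) 1)).toReal) ^
    ((n : ℝ)⁻¹)

/-- `A^{*n}`: the open ball in `ℝⁿ` centered at the origin with the same measure as `A`. -/
noncomputable def schwarzSet (n : ℕ) (A : Set (EuclideanSpace ℝ (Fin n))) :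
    Set (EuclideanSpace ℝ (Fin n)) :=
  Metric.ball 0 (schwarzRadius n A)

/-- The Schwarz rearrangement `u^{*n}(x) := ∫₀^∞ χ_{{|u|>t}^{*n}}(x) dt`. -/
noncomputable def schwarzRearr (n : ℕ) (u : EuclideanSpace ℝ (Fin n) → ℝ) :
    EuclideanSpace ℝ (Fin n) → ℝ := fun x =>
  ∫ t in Set.Ioi (0 : ℝ), (schwarzSet n {y | t < |u y|}).indicator (fun _ => (1 : ℝ)) x


set_option linter.unusedVariables false
set_option linter.unusedSectionVars false
set_option linter.deprecated false
open MeasureTheory Real Set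
open scoped ENNReal

/-- Indicator with values in `ℝ≥0∞`. -/
noncomputable def ind {X : Type*} (A : Set X) : X → ℝ≥0∞ := A.indicator (fun _ => 1)

lemma measurable_ind {X : Type*} [MeasurableSpace X] {A : Set X} (hA : MeasurableSet A) :
    Measurable (ind A) := measurable_const.indicator hA

lemma ind_of_mem {X : Type*} {A : Set X} {x : X} (h : x ∈ A) : ind A x = 1 := by simp [ind, h]
lemma ind_of_notMem {X : Type*} {A : Set X} {x : X} (h : x ∉ A) : ind A x = 0 := by simp [ind, h]

lemma lintegral_ind {X : Type*} [MeasurableSpace X] {μ : Measure X} {A : Set X}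
    (hA : MeasurableSet A) : ∫⁻ x, ind A x ∂μ = μ A := by
  simp [ind, lintegral_indicator hA]

lemma ind_le_ind {X : Type*} {A B : Set X} (h : A ⊆ B) (x : X) : ind A x ≤ ind B x :=
  Set.indicator_le_indicator_of_subset h (fun _ => zero_le) x

lemma ind_mul {X : Type*} (A B : Set X) (x : X) : ind A x * ind B x = ind (A ∩ B) x := by
  by_cases h1 : x ∈ A <;> by_cases h2 : x ∈ B <;> simp [ind, h1, h2]

lemma ind_le_one {X : Type*} (A : Set X) (x : X) : ind A x ≤ 1 := by
  by_cases h1 : x ∈ A <;> simp [ind, h1]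

/-- The trilinear Riesz functional on sets. -/
noncomputable def riesz {G : Type*} [Sub G] [MeasurableSpace G] (μ : Measure G) (A B C : Set G) :
    ℝ≥0∞ := ∫⁻ x, ∫⁻ y, ind A x * ind B y * ind C (x - y) ∂μ ∂μ

/-- overlap of `A` and `B + z` -/
def ovl {G : Type*} [Sub G] (A B : Set G) (z : G) : Set G := A ∩ {x | x - z ∈ B}

section group
variable {G : Type*} [AddCommGroup G] [MeasurableSpace G] [MeasurableAdd₂ G] [MeasurableSub₂ G]
  [MeasurableNeg G]
  {μ : Measure G} [SFinite μ] [μ.IsAddLeftInvariant] [μ.IsNegInvariant]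

lemma measurable_sub_set {A B : Set G} (hB : MeasurableSet B) (z : G) :
    MeasurableSet {x | x - z ∈ B} := by
  have : Measurable (fun x : G => x - z) := by fun_prop
  exact this hB

lemma measurableSet_ovl {A B : Set G} (hA : MeasurableSet A) (hB : MeasurableSet B) (z : G) :
    MeasurableSet (ovl A B z) := hA.inter (measurable_sub_set (A := A) hB z)

lemma riesz_eq {A B C : Set G} (hA : MeasurableSet A) (hB : MeasurableSet B)
    (hC : MeasurableSet C) :
    riesz μ A B C = ∫⁻ z, ind C z * μ (ovl A B z) ∂μ := by
  have mA := measurable_ind hA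
  have mB := measurable_ind hB
  have mC := measurable_ind hC
  have h1 : ∀ x, ∫⁻ y, ind A x * ind B y * ind C (x - y) ∂μ
      = ∫⁻ z, ind A x * ind B (x - z) * ind C z ∂μ := by
    intro x
    rw [← lintegral_sub_left_eq_self (fun z => ind A x * ind B (x - z) * ind C z) x]
    simp
  unfold riesz
  simp_rw [h1]
  rw [lintegral_lintegral_swap]
  · refine lintegral_congr fun z => ?_
    have : ∀ x, ind A x * ind B (x - z) * ind C z = ind C z * ind (ovl A B z) x := by
      intro x
      rw [ovl, ← ind_mul, mul_comm]; rfl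
    simp_rw [this]
    rw [lintegral_const_mul _ (measurable_ind (measurableSet_ovl hA hB z)),
      lintegral_ind (measurableSet_ovl hA hB z)]
  · apply Measurable.aemeasurable
    simp only [Function.uncurry_def]
    fun_prop

lemma lintegral_ovl {A B : Set G} (hA : MeasurableSet A) (hB : MeasurableSet B) :
    ∫⁻ z, μ (ovl A B z) ∂μ = μ A * μ B := by
  have := riesz_eq (μ := μ) hA hB MeasurableSet.univ
  simp only [ind, indicator_univ, one_mul] at this
  rw [← this]
  have mA := measurable_ind hA
  have mB := measurable_ind hB
  unfold riesz
  have : ∀ x, ∫⁻ y, ind A x * ind B y * ind univ (x - y) ∂μ = ind A x * μ B := by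
    intro x
    simp_rw [ind_of_mem (mem_univ _), mul_one]
    rw [lintegral_const_mul _ mB, lintegral_ind hB]
  simp_rw [this]
  rw [lintegral_mul_const _ mA, lintegral_ind hA]

end group

/-- Cutting off the left part of a bounded set. -/
lemma exists_cut {A : Set ℝ} {R t : ℝ} (hAR : A ⊆ Ioo (-R) R)
    (hA : MeasurableSet A) (ht : 0 ≤ t) (htA : ENNReal.ofReal t ≤ volume A) :
    ∃ α, volume (A ∩ Iio α) = ENNReal.ofReal t ∧
      volume (A ∩ Ici α) = volume A - ENNReal.ofReal t := by
  have fin : volume A ≠ ⊤ := (lt_of_le_of_lt (measure_mono hAR) (by simp)).ne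
  have finS : ∀ α, volume (A ∩ Iio α) ≠ ⊤ := fun α =>
    (lt_of_le_of_lt (measure_mono inter_subset_left) fin.lt_top).ne
  set F : ℝ → ℝ := fun α => (volume (A ∩ Iio α)).toReal with hF
  have hlip : LipschitzWith 1 F := by
    apply LipschitzWith.of_le_add_mul
    intro x y
    have h1 : volume (A ∩ Iio x) ≤ volume (A ∩ Iio y) + volume (Icc y x) := by
      refine (measure_mono ?_).trans (measure_union_le _ _)
      rintro p ⟨hp, hpx⟩
      rcases lt_or_ge p y with h | h
      · exact Or.inl ⟨hp, h⟩
      · exact Or.inr ⟨h, hpx.le⟩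
    have h2 := ENNReal.toReal_mono (by simp [finS]) h1
    rw [ENNReal.toReal_add (finS _) (by simp)] at h2
    refine h2.trans ?_
    simp only [Real.volume_Icc, NNReal.coe_one, one_mul, hF]
    gcongr
    rw [ENNReal.toReal_ofReal', Real.dist_eq]
    exact max_le (le_abs_self _) (abs_nonneg _)
  have hR : -|R| ≤ |R| := by linarith [abs_nonneg R]
  have hFl : F (-|R|) = 0 := by
    have : A ∩ Iio (-|R|) = ∅ := by
      ext p; simp only [mem_inter_iff, mem_Iio, mem_empty_iff_false, iff_false, not_and, not_lt]
      intro hp; have := (hAR hp).1; linarith [le_abs_self R]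
    simp [hF, this]
  have hFr : F (|R|) = (volume A).toReal := by
    have : A ∩ Iio (|R|) = A := by
      apply inter_eq_left.2
      intro p hp; have := (hAR hp).2; simp only [mem_Iio]; linarith [le_abs_self R]
    simp [hF, this]
  have := intermediate_value_Icc hR hlip.continuous.continuousOn
  have ht2 : t ≤ (volume A).toReal := (ENNReal.ofReal_le_iff_le_toReal fin).1 htA
  obtain ⟨α, -, hα⟩ := this (show t ∈ _ by rw [hFl, hFr]; exact ⟨ht, ht2⟩)
  have e1 : volume (A ∩ Iio α) = ENNReal.ofReal t := by
    rw [← hα, hF, ENNReal.ofReal_toReal (finS _)]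
  refine ⟨α, e1, ?_⟩
  have e2 := measure_inter_add_diff (μ := volume) A (measurableSet_Iio (a := α))
  have e3 : A \ Iio α = A ∩ Ici α := by
    rw [diff_eq]; simp
  rw [e3, e1] at e2
  rw [← e2, ENNReal.add_sub_cancel_left ENNReal.ofReal_ne_top]

lemma riesz1_upper {A B C : Set ℝ} {R t : ℝ} (hA : MeasurableSet A) (hB : MeasurableSet B)
    (hC : MeasurableSet C) (hAR : A ⊆ Ioo (-R) R) (hBR : B ⊆ Ioo (-R) R)
    (ht : 0 ≤ t) (htA : ENNReal.ofReal t ≤ volume A) (htB : ENNReal.ofReal t ≤ volume B) :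
    riesz volume A B C ≤ ENNReal.ofReal t * volume C +
      (volume A - ENNReal.ofReal t) * (volume B - ENNReal.ofReal t) := by
  obtain ⟨α, hα1, hα2⟩ := exists_cut hAR hA ht htA
  obtain ⟨β, hβ1, hβ2⟩ := exists_cut hBR hB ht htB
  have key : ∀ z, volume (ovl A B z) ≤ ENNReal.ofReal t
      + volume (ovl (A ∩ Ici α) (B ∩ Ici β) z) := by
    intro z
    have h1 : ovl A B z ⊆ (ovl A B z ∩ Iio (max α (β + z))) ∪ ovl (A ∩ Ici α) (B ∩ Ici β) z := by
      rintro x ⟨hx1, hx2⟩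
      rcases lt_or_ge x (max α (β + z)) with h | h
      · exact Or.inl ⟨⟨hx1, hx2⟩, h⟩
      · refine Or.inr ⟨⟨hx1, (le_max_left _ _).trans h⟩, ⟨hx2, ?_⟩⟩
        have := (le_max_right _ _).trans h
        simp only [mem_Ici]; linarith
    refine (measure_mono h1).trans ((measure_union_le _ _).trans ?_)
    gcongr
    rcases le_total α (β + z) with h | h
    · rw [max_eq_right h, ← hβ1]
      have : ovl A B z ∩ Iio (β + z) ⊆ (fun x => x + (-z)) ⁻¹' (B ∩ Iio β) := by
        rintro x ⟨⟨hx1, hx2⟩, hx3⟩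
        refine ⟨by simpa [sub_eq_add_neg] using hx2, ?_⟩
        simp only [mem_Iio] at *; linarith
      refine (measure_mono this).trans ?_
      rw [measure_preimage_add_right]
    · rw [max_eq_left h, ← hα1]
      apply measure_mono
      rintro x ⟨⟨hx1, hx2⟩, hx3⟩
      exact ⟨hx1, hx3⟩
  rw [riesz_eq hA hB hC]
  calc ∫⁻ z, ind C z * volume (ovl A B z)
      ≤ ∫⁻ z, (ENNReal.ofReal t * ind C z + volume (ovl (A ∩ Ici α) (B ∩ Ici β) z)) := by
        refine lintegral_mono fun z => ?_
        by_cases hz : z ∈ C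
        · simp only [ind_of_mem hz, one_mul, mul_one]; exact key z
        · simp [ind_of_notMem hz]
    _ = _ := by
        rw [lintegral_add_left ((measurable_ind hC).const_mul _),
          lintegral_const_mul _ (measurable_ind hC), lintegral_ind hC,
          lintegral_ovl (hA.inter measurableSet_Ici) (hB.inter measurableSet_Ici), hα2, hβ2]

/-- centered open interval of length `a` -/
def cI (a : ℝ) : Set ℝ := Ioo (-(a/2)) (a/2)

lemma measurableSet_cI (a : ℝ) : MeasurableSet (cI a) := measurableSet_Ioo

lemma volume_cI (a : ℝ) : volume (cI a) = ENNReal.ofReal a := by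
  simp [cI]

lemma volume_ovl_cI (a b z : ℝ) : volume (ovl (cI a) (cI b) z) =
    ENNReal.ofReal (min (min a b) ((a+b)/2 - |z|)) := by
  have : ovl (cI a) (cI b) z = Ioo (max (-(a/2)) (z - b/2)) (min (a/2) (z + b/2)) := by
    ext x
    simp only [ovl, cI, mem_inter_iff, mem_Ioo, mem_setOf_eq, max_lt_iff, lt_min_iff]
    constructor
    · rintro ⟨⟨h1, h2⟩, h3, h4⟩; refine ⟨⟨?_, ?_⟩, ?_, ?_⟩ <;> linarith
    · rintro ⟨⟨h1, h2⟩, h3, h4⟩; refine ⟨⟨?_, ?_⟩, ?_, ?_⟩ <;> linarith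
  rw [this, Real.volume_Ioo]
  congr 1
  rcases le_total 0 z with hz | hz
  · rw [abs_of_nonneg hz]
    simp only [min_def, max_def]; split_ifs <;> linarith
  · rw [abs_of_nonpos hz]
    simp only [min_def, max_def]; split_ifs <;> linarith

lemma riesz1_lower (a b c : ℝ) (ha : 0 ≤ a) (hb : 0 ≤ b) (hc : 0 ≤ c) :
    ∃ t, 0 ≤ t ∧ t ≤ a ∧ t ≤ b ∧
      ENNReal.ofReal t * ENNReal.ofReal c + ENNReal.ofReal (a - t) * ENNReal.ofReal (b - t)
        ≤ riesz volume (cI a) (cI b) (cI c) := by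
  set t := max 0 (min (min a b) ((a+b-c)/2)) with ht
  have h1 : t ≤ a := max_le ha ((min_le_left _ _).trans (min_le_left _ _))
  have h2 : t ≤ b := max_le hb ((min_le_left _ _).trans (min_le_right _ _))
  have h0 : 0 ≤ t := le_max_left _ _
  refine ⟨t, h0, h1, h2, ?_⟩
  have mC := measurableSet_cI c
  rw [riesz_eq (measurableSet_cI a) (measurableSet_cI b) mC]
  rw [← volume_cI (a - t), ← volume_cI (b - t), ← lintegral_ovl (measurableSet_cI _)
    (measurableSet_cI _), ← volume_cI c, ← lintegral_ind mC,
    ← lintegral_const_mul _ (measurable_ind mC),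
    ← lintegral_add_left ((measurable_ind mC).const_mul _)]
  refine lintegral_mono fun z => ?_
  simp only [volume_ovl_cI]
  have e : min (min (a - t) (b - t)) ((a - t + (b - t)) / 2 - |z|)
      = min (min a b) ((a+b)/2 - |z|) - t := by
    rw [show (a - t + (b - t)) / 2 - |z| = (a+b)/2 - |z| - t by ring,
      min_sub_sub_right, min_sub_sub_right]
  rw [e]
  by_cases hz : z ∈ cI c
  · rw [ind_of_mem hz, mul_one, one_mul]
    have hz' : |z| < c / 2 := by rw [abs_lt]; exact hz
    rcases eq_or_lt_of_le h0 with h | h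
    · rw [← h]; simp
    · have h3 : t ≤ (a+b-c)/2 := by
        have : t = min (min a b) ((a+b-c)/2) := by
          rcases max_choice 0 (min (min a b) ((a+b-c)/2)) with h' | h'
          · rw [← ht] at h'; linarith
          · rw [← ht] at h'; exact h'
        rw [this]; exact min_le_right _ _
      have h4 : t ≤ min (min a b) ((a+b)/2 - |z|) := by
        refine le_min (le_min h1 h2) (by linarith)
      rw [← ENNReal.ofReal_add h0 (by linarith)]
      apply ENNReal.ofReal_le_ofReal; linarith
  · rw [ind_of_notMem hz, mul_zero, zero_mul, zero_add]
    have hz' : c / 2 ≤ |z| := by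
      by_contra h; exact hz (abs_lt.1 (not_le.1 h))
    have : min (min a b) ((a+b)/2 - |z|) - t ≤ 0 := by
      have : min (min a b) ((a+b)/2 - |z|) ≤ min (min a b) ((a+b-c)/2) :=
        min_le_min le_rfl (by linarith)
      linarith [le_max_right 0 (min (min a b) ((a+b-c)/2))]
    rw [ENNReal.ofReal_of_nonpos this]

/-- Symmetrization of subsets of the line. -/
def st1 (A : Set ℝ) : Set ℝ := cI (volume A).toReal

lemma riesz1 {A B C : Set ℝ} {R : ℝ} (hA : MeasurableSet A) (hB : MeasurableSet B)
    (hC : MeasurableSet C) (hAR : A ⊆ Ioo (-R) R) (hBR : B ⊆ Ioo (-R) R)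
    (hCR : C ⊆ Ioo (-R) R) :
    riesz volume A B C ≤ riesz volume (st1 A) (st1 B) (st1 C) := by
  have fin : ∀ {A : Set ℝ}, A ⊆ Ioo (-R) R → volume A ≠ ⊤ := fun hAR =>
    (lt_of_le_of_lt (measure_mono hAR) (by simp)).ne
  obtain ⟨t, h0, h1, h2, h3⟩ := riesz1_lower (volume A).toReal (volume B).toReal (volume C).toReal
    ENNReal.toReal_nonneg ENNReal.toReal_nonneg ENNReal.toReal_nonneg
  refine le_trans ?_ h3
  rw [ENNReal.ofReal_sub _ h0, ENNReal.ofReal_sub _ h0, ENNReal.ofReal_toReal (fin hAR),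
    ENNReal.ofReal_toReal (fin hBR), ENNReal.ofReal_toReal (fin hCR)]
  exact riesz1_upper hA hB hC hAR hBR h0 ((ENNReal.ofReal_le_iff_le_toReal (fin hAR)).2 h1)
    ((ENNReal.ofReal_le_iff_le_toReal (fin hBR)).2 h2)

set_option linter.unusedVariables false
set_option linter.unusedSectionVars false
set_option linter.deprecated false
open MeasureTheory Real Set
open scoped ENNReal

/-- slice of a subset of `ℝ × F` -/
def sl {F : Type*} (A : Set (ℝ × F)) (y : F) : Set ℝ := {t | (t, y) ∈ A}

/-- Steiner symmetrization in a product -/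
def st {F : Type*} (A : Set (ℝ × F)) : Set (ℝ × F) := {p | p.1 ∈ st1 (sl A p.2)}

lemma sl_st {F : Type*} (A : Set (ℝ × F)) (y : F) : sl (st A) y = st1 (sl A y) := rfl

lemma volume_st1 {A : Set ℝ} (h : volume A ≠ ⊤) : volume (st1 A) = volume A := by
  rw [st1, volume_cI, ENNReal.ofReal_toReal h]

lemma cI_subset {a b : ℝ} (h : a ≤ b) : cI a ⊆ cI b := Ioo_subset_Ioo (by linarith) (by linarith)

lemma finite_of_subset_cI {X : Set ℝ} {a : ℝ} (h : X ⊆ cI a) : volume X ≠ ⊤ :=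
  (lt_of_le_of_lt (measure_mono h) (by simp [volume_cI])).ne

lemma st1_subset {X : Set ℝ} {a : ℝ} (ha : 0 ≤ a) (h : X ⊆ cI a) : st1 X ⊆ cI a := by
  apply cI_subset
  have := ENNReal.toReal_mono (by simp [volume_cI]) (measure_mono (μ := volume) h)
  rwa [volume_cI, ENNReal.toReal_ofReal ha] at this

section prod
variable {m : ℕ}

lemma measurableSet_sl {A : Set (ℝ × (Fin m → ℝ))} (hA : MeasurableSet A) (y : (Fin m → ℝ)) :
    MeasurableSet (sl A y) := by
  have : Measurable (fun t : ℝ => (t, y)) := by fun_prop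
  exact this hA

lemma measurableSet_st {A : Set (ℝ × (Fin m → ℝ))} (hA : MeasurableSet A) : MeasurableSet (st A) := by
  have h1 : Measurable (fun y : (Fin m → ℝ) => volume (sl A y)) :=
    measurable_measure_prodMk_right hA
  have h2 : Measurable (fun y : (Fin m → ℝ) => (volume (sl A y)).toReal) := h1.ennreal_toReal
  have : st A = {p : ℝ × (Fin m → ℝ) | -((volume (sl A p.2)).toReal / 2) < p.1} ∩
      {p : ℝ × (Fin m → ℝ) | p.1 < (volume (sl A p.2)).toReal / 2} := rfl
  rw [this]
  apply MeasurableSet.inter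
  · exact measurableSet_lt ((h2.comp measurable_snd).div_const 2).neg measurable_fst
  · exact measurableSet_lt measurable_fst ((h2.comp measurable_snd).div_const 2)

lemma volume_eq_sl {A : Set (ℝ × (Fin m → ℝ))} (hA : MeasurableSet A) :
    volume A = ∫⁻ y, volume (sl A y) := by
  rw [Measure.volume_eq_prod, Measure.prod_apply_symm hA]; rfl

lemma volume_st {A : Set (ℝ × (Fin m → ℝ))} (hA : MeasurableSet A) (hb : ∀ y, volume (sl A y) ≠ ⊤) :
    volume (st A) = volume A := by
  rw [volume_eq_sl hA, volume_eq_sl (measurableSet_st hA)]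
  simp_rw [sl_st, fun y => volume_st1 (hb y)]

lemma riesz_prod {A B C : Set (ℝ × (Fin m → ℝ))} (hA : MeasurableSet A) (hB : MeasurableSet B)
    (hC : MeasurableSet C) : riesz volume A B C =
      ∫⁻ y₁, ∫⁻ y₂, riesz volume (sl A y₁) (sl B y₂) (sl C (y₁ - y₂)) := by
  have mA := measurable_ind hA
  have mB := measurable_ind hB
  have mC := measurable_ind hC
  have m1 : Measurable (fun q : (ℝ × (Fin m → ℝ)) × (ℝ × (Fin m → ℝ)) => ind A q.1 * ind B q.2 * ind C (q.1 - q.2)) := by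
    fun_prop
  unfold riesz
  rw [Measure.volume_eq_prod ℝ (Fin m → ℝ), lintegral_prod_symm']
  · refine lintegral_congr fun y₁ => ?_
    have : ∀ t₁ : ℝ, ∫⁻ p : ℝ × (Fin m → ℝ), ind A (t₁, y₁) * ind B p * ind C ((t₁, y₁) - p)
        ∂((volume : Measure ℝ).prod (volume : Measure (Fin m → ℝ))) =
        ∫⁻ y₂ : (Fin m → ℝ), ∫⁻ t₂ : ℝ, ind A (t₁, y₁) * ind B (t₂, y₂) * ind C ((t₁, y₁) - (t₂, y₂)) := by
      intro t₁
      rw [lintegral_prod_symm']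
      fun_prop
    simp_rw [this]
    rw [lintegral_lintegral_swap]
    · rfl
    · apply Measurable.aemeasurable
      simp only [Function.uncurry_def]
      apply Measurable.lintegral_prod_right'
        (f := fun q : (ℝ × (Fin m → ℝ)) × ℝ => ind A (q.1.1, y₁) * ind B (q.2, q.1.2) *
          ind C ((q.1.1, y₁) - (q.2, q.1.2)))
      fun_prop
  · exact m1.lintegral_prod_right' 

lemma riesz_st {A B C : Set (ℝ × (Fin m → ℝ))} {R : ℝ} (hA : MeasurableSet A) (hB : MeasurableSet B)
    (hC : MeasurableSet C) (hAR : ∀ y, sl A y ⊆ Ioo (-R) R) (hBR : ∀ y, sl B y ⊆ Ioo (-R) R)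
    (hCR : ∀ y, sl C y ⊆ Ioo (-R) R) :
    riesz volume A B C ≤ riesz volume (st A) (st B) (st C) := by
  rw [riesz_prod hA hB hC, riesz_prod (measurableSet_st hA) (measurableSet_st hB)
    (measurableSet_st hC)]
  refine lintegral_mono fun y₁ => lintegral_mono fun y₂ => ?_
  exact riesz1 (measurableSet_sl hA _) (measurableSet_sl hB _) (measurableSet_sl hC _)
    (hAR _) (hBR _) (hCR _)

lemma st_subset {A D : Set (ℝ × (Fin m → ℝ))} (h : A ⊆ D) (hD : ∀ y, ∃ ρ, 0 ≤ ρ ∧ sl D y = cI ρ) :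
    st A ⊆ D := by
  rintro ⟨t, y⟩ hp
  obtain ⟨ρ, h0, h1⟩ := hD y
  have h2 : sl A y ⊆ cI ρ := by rw [← h1]; exact fun t ht => h ht
  have : t ∈ sl D y := by rw [h1]; exact st1_subset h0 h2 hp
  exact this

lemma st1_decrease {X : Set ℝ} {ρ : ℝ} (hX : MeasurableSet X) (hfin : volume X ≠ ⊤) :
    volume (st1 X \ cI ρ) + min (volume (X \ cI ρ)) (volume (cI ρ \ X)) ≤ volume (X \ cI ρ) := by
  rcases le_total (volume X).toReal ρ with h | h
  · have : st1 X \ cI ρ = ∅ := diff_eq_empty.2 (cI_subset h)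
    simp [this]
  · have h1 : volume (st1 X \ cI ρ) = volume X - volume (cI ρ) := by
      rw [measure_diff (μ := volume) (show cI ρ ⊆ st1 X from cI_subset h) (measurableSet_cI _).nullMeasurableSet
        (by simp [volume_cI]), volume_st1 hfin]
    have h2 := measure_inter_add_diff (μ := volume) X (measurableSet_cI ρ)
    have h3 := measure_inter_add_diff (μ := volume) (cI ρ) hX
    rw [h1, ← h2, ← h3, inter_comm (cI ρ) X]
    have hk : volume (X ∩ cI ρ) ≠ ⊤ := ne_top_of_le_ne_top hfin (measure_mono inter_subset_left)
    rw [ENNReal.add_sub_add_eq_sub_left hk]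
    exact (add_le_add le_rfl (min_comm _ _).le).trans (by
      rcases le_total (volume (X \ cI ρ)) (volume (cI ρ \ X)) with h | h
      · rw [tsub_eq_zero_of_le h]; simp
      · rw [min_eq_left h, tsub_add_cancel_of_le h])

lemma st_decrease {A D : Set (ℝ × (Fin m → ℝ))} (hA : MeasurableSet A) (hDm : MeasurableSet D)
    (hb : ∀ y, volume (sl A y) ≠ ⊤) (hD : ∀ y, ∃ ρ, 0 ≤ ρ ∧ sl D y = cI ρ) :
    volume (st A \ D) + ∫⁻ y, min (volume (sl (A \ D) y)) (volume (sl (D \ A) y))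
      ≤ volume (A \ D) := by
  rw [volume_eq_sl ((measurableSet_st hA).diff hDm), volume_eq_sl (hA.diff hDm)]
  rw [← lintegral_add_left]
  · refine lintegral_mono fun y => ?_
    obtain ⟨ρ, h0, h1⟩ := hD y
    have := st1_decrease (ρ := ρ) (measurableSet_sl hA y) (hb y)
    rw [← h1] at this
    exact this
  · exact measurable_measure_prodMk_right ((measurableSet_st hA).diff hDm)

lemma ovl_le_min {X Y : Set (ℝ × (Fin m → ℝ))} (hX : MeasurableSet X) (hY : MeasurableSet Y) (c : ℝ) :
    volume (ovl X Y (c, (0 : (Fin m → ℝ)))) ≤ ∫⁻ y, min (volume (sl X y)) (volume (sl Y y)) := by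
  rw [volume_eq_sl (measurableSet_ovl hX hY _)]
  refine lintegral_mono fun y => le_min ?_ ?_
  · exact measure_mono fun t ht => ht.1
  · have : sl (ovl X Y (c, (0 : (Fin m → ℝ)))) y ⊆ (fun t => t + (-c)) ⁻¹' sl Y y := by
      rintro t ⟨_, ht⟩
      simpa [sl, sub_eq_add_neg] using ht
    refine (measure_mono this).trans ?_
    rw [measure_preimage_add_right]

end prod

set_option linter.unusedVariables false
set_option linter.unusedSectionVars false
set_option linter.deprecated false
open MeasureTheory Real Set
open scoped ENNReal

/-- An orthonormal frame of `ℝ^(m+1)`, splitting off the first direction. -/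
structure Frame (m : ℕ) where
  e : EuclideanSpace ℝ (Fin (m + 1)) ≃ᵐ ℝ × (Fin m → ℝ)
  mp : MeasurePreserving e volume volume
  map_sub : ∀ x y, e (x - y) = e x - e y
  norm_sq : ∀ x, ‖x‖ ^ 2 = (e x).1 ^ 2 + ∑ i, (e x).2 i ^ 2

lemma exists_frame (m : ℕ) (z : EuclideanSpace ℝ (Fin (m + 1))) (hz : z ≠ 0) :
    ∃ f : Frame m, f.e z = (‖z‖, 0) := by
  have hz' : ‖z‖ ≠ 0 := norm_ne_zero_iff.2 hz
  have hon : Orthonormal ℝ (({(0 : Fin (m + 1))} : Set (Fin (m + 1))).restrict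
      (fun _ => (‖z‖⁻¹ • z : EuclideanSpace ℝ (Fin (m + 1))))) := by
    constructor
    · intro i
      show ‖‖z‖⁻¹ • z‖ = 1
      rw [norm_smul, norm_inv, norm_norm, inv_mul_cancel₀ hz']
    · intro i j hij
      exact absurd (Subsingleton.elim i j) hij
  obtain ⟨b, hb⟩ := hon.exists_orthonormalBasis_extension_of_card_eq (by simp)
  have hb0 : b 0 = ‖z‖⁻¹ • z := hb 0 rfl
  let e := (b.measurableEquiv.trans (MeasurableEquiv.toLp 2 (Fin (m + 1) → ℝ)).symm).trans
    (MeasurableEquiv.piFinSuccAbove (fun _ => ℝ) 0)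
  have he : ∀ x, e x = (b.repr x 0, fun j => b.repr x j.succ) := by
    intro x
    rfl
  refine ⟨⟨e, ?_, ?_, ?_⟩, ?_⟩
  · have h1 : MeasurePreserving b.measurableEquiv volume volume :=
      b.measurePreserving_measurableEquiv
    have h2 := EuclideanSpace.volume_preserving_symm_measurableEquiv_toLp (Fin (m + 1))
    have h3 := volume_preserving_piFinSuccAbove (fun _ : Fin (m + 1) => ℝ) 0
    exact (h1.trans h2).trans h3
  · intro x y
    simp only [he, map_sub, PiLp.sub_apply, Prod.mk_sub_mk]
    rfl
  · intro x
    simp only [he]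
    rw [← b.repr.norm_map x, EuclideanSpace.norm_sq_eq, Fin.sum_univ_succ]
    simp
  · show e z = _
    have : z = ‖z‖ • b 0 := by rw [hb0, smul_smul, mul_inv_cancel₀ hz', one_smul]
    have h2 : b.repr z = ‖z‖ • EuclideanSpace.single 0 1 := by
      conv_lhs => rw [this]
      rw [map_smul, b.repr_self]
    rw [he, h2]
    ext <;> simp

namespace Frame
variable {m : ℕ} (f : Frame m)

/-- Steiner symmetrization in the first direction of a frame. -/
def S (A : Set (EuclideanSpace ℝ (Fin (m + 1)))) : Set (EuclideanSpace ℝ (Fin (m + 1))) :=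
  f.e ⁻¹' st (f.e.symm ⁻¹' A)

lemma riesz_preimage (A B C : Set (ℝ × (Fin m → ℝ))) :
    riesz volume (f.e ⁻¹' A) (f.e ⁻¹' B) (f.e ⁻¹' C) = riesz volume A B C := by
  unfold riesz
  rw [← f.mp.lintegral_comp_emb f.e.measurableEmbedding]
  refine lintegral_congr fun x => ?_
  rw [← f.mp.lintegral_comp_emb f.e.measurableEmbedding]
  refine lintegral_congr fun y => ?_
  simp only [← f.map_sub]
  rfl

lemma volume_preimage (A : Set (ℝ × (Fin m → ℝ))) : volume (f.e ⁻¹' A) = volume A :=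
  f.mp.measure_preimage_emb f.e.measurableEmbedding A

lemma preimage_symm (A : Set (EuclideanSpace ℝ (Fin (m + 1)))) :
    f.e ⁻¹' (f.e.symm ⁻¹' A) = A := by
  ext x; simp

lemma measurable_symm_preimage {A : Set (EuclideanSpace ℝ (Fin (m + 1)))} (hA : MeasurableSet A) :
    MeasurableSet (f.e.symm ⁻¹' A) := f.e.symm.measurable hA

lemma measurableSet_S {A : Set (EuclideanSpace ℝ (Fin (m + 1)))} (hA : MeasurableSet A) :
    MeasurableSet (f.S A) := f.e.measurable (measurableSet_st (f.measurable_symm_preimage hA))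

lemma sl_ball (r : ℝ) (y : Fin m → ℝ) :
    ∃ ρ, 0 ≤ ρ ∧ sl (f.e.symm ⁻¹' (Metric.ball 0 r)) y = cI ρ := by
  refine ⟨if 0 ≤ r then 2 * √(r ^ 2 - ∑ i, y i ^ 2) else 0, by split_ifs <;> positivity, ?_⟩
  ext t
  simp only [sl, mem_preimage, mem_setOf_eq, Metric.mem_ball, dist_zero_right]
  have hn := f.norm_sq (f.e.symm (t, y))
  simp only [MeasurableEquiv.apply_symm_apply] at hn
  split_ifs with h
  · rw [← sq_lt_sq₀ (norm_nonneg _) h, hn]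
    simp only [cI, mem_Ioo]
    rw [mul_div_cancel_left₀ _ (two_ne_zero), ← abs_lt, Real.lt_sqrt (abs_nonneg _), sq_abs]
    constructor <;> intro h <;> linarith
  · simp only [cI, mem_Ioo]
    constructor
    · intro h'; linarith [norm_nonneg (f.e.symm (t, y))]
    · rintro ⟨h1, h2⟩; linarith

lemma sl_subset {A : Set (EuclideanSpace ℝ (Fin (m + 1)))} {R : ℝ} (hA : A ⊆ Metric.ball 0 R)
    (y : Fin m → ℝ) : sl (f.e.symm ⁻¹' A) y ⊆ Ioo (-R) R := by
  intro t ht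
  have h1 := hA ht
  simp only [Metric.mem_ball, dist_zero_right] at h1
  have hn := f.norm_sq (f.e.symm (t, y))
  simp only [MeasurableEquiv.apply_symm_apply] at hn
  have hs : 0 ≤ ∑ i, y i ^ 2 := by positivity
  have : |t| ≤ ‖f.e.symm (t, y)‖ := by
    apply abs_le_of_sq_le_sq _ (norm_nonneg _); linarith
  exact abs_lt.1 (this.trans_lt h1)

lemma sl_fin {A : Set (EuclideanSpace ℝ (Fin (m + 1)))} {R : ℝ} (hA : A ⊆ Metric.ball 0 R)
    (y : Fin m → ℝ) : volume (sl (f.e.symm ⁻¹' A) y) ≠ ⊤ :=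
  (lt_of_le_of_lt (measure_mono (f.sl_subset hA y)) (by simp)).ne

lemma riesz_S {A B C : Set (EuclideanSpace ℝ (Fin (m + 1)))} {R : ℝ} (hA : MeasurableSet A)
    (hB : MeasurableSet B) (hC : MeasurableSet C) (hAR : A ⊆ Metric.ball 0 R)
    (hBR : B ⊆ Metric.ball 0 R) (hCR : C ⊆ Metric.ball 0 R) :
    riesz volume A B C ≤ riesz volume (f.S A) (f.S B) (f.S C) := by
  unfold S
  rw [riesz_preimage]
  conv_lhs => rw [← f.preimage_symm A, ← f.preimage_symm B, ← f.preimage_symm C]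
  rw [riesz_preimage]
  exact riesz_st (f.measurable_symm_preimage hA) (f.measurable_symm_preimage hB)
    (f.measurable_symm_preimage hC) (f.sl_subset hAR) (f.sl_subset hBR) (f.sl_subset hCR)

lemma volume_S {A : Set (EuclideanSpace ℝ (Fin (m + 1)))} {R : ℝ} (hA : MeasurableSet A)
    (hAR : A ⊆ Metric.ball 0 R) : volume (f.S A) = volume A := by
  unfold S
  rw [volume_preimage, volume_st (f.measurable_symm_preimage hA) (f.sl_fin hAR),
    ← f.volume_preimage, preimage_symm]

lemma S_subset {A : Set (EuclideanSpace ℝ (Fin (m + 1)))} {R : ℝ}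
    (hAR : A ⊆ Metric.ball 0 R) : f.S A ⊆ Metric.ball 0 R := by
  have := st_subset (preimage_mono (f := f.e.symm) hAR) (f.sl_ball R)
  intro x hx
  have := this hx
  simpa using this

lemma S_decrease {A : Set (EuclideanSpace ℝ (Fin (m + 1)))} {R r : ℝ} (hA : MeasurableSet A)
    (hAR : A ⊆ Metric.ball 0 R) {z : EuclideanSpace ℝ (Fin (m + 1))} {c : ℝ}
    (hz : f.e z = (c, 0)) :
    volume (f.S A \ Metric.ball 0 r) +
      volume (ovl (A \ Metric.ball 0 r) (Metric.ball 0 r \ A) z) ≤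
      volume (A \ Metric.ball 0 r) := by
  set D : Set (EuclideanSpace ℝ (Fin (m + 1))) := Metric.ball 0 r with hD
  have hDm : MeasurableSet D := measurableSet_ball
  have h1 := st_decrease (f.measurable_symm_preimage hA) (f.measurable_symm_preimage hDm)
    (f.sl_fin hAR) (f.sl_ball r)
  have h2 := ovl_le_min (f.measurable_symm_preimage (hA.diff hDm))
    (f.measurable_symm_preimage (hDm.diff hA)) c
  have h3 := (add_le_add le_rfl h2).trans h1
  rw [← f.volume_preimage, ← f.volume_preimage, ← f.volume_preimage (_ \ _)] at h3
  have e1 : f.e ⁻¹' (st (f.e.symm ⁻¹' A) \ f.e.symm ⁻¹' D) = f.S A \ D := by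
    ext x; simp [S]
  have e2 : f.e ⁻¹' (f.e.symm ⁻¹' A \ f.e.symm ⁻¹' D) = A \ D := by
    ext x; simp
  have e3 : f.e ⁻¹' (ovl (f.e.symm ⁻¹' (A \ D)) (f.e.symm ⁻¹' (D \ A)) (c, 0)) =
      ovl (A \ D) (D \ A) z := by
    ext x
    simp only [ovl, mem_inter_iff, mem_preimage, mem_setOf_eq, MeasurableEquiv.symm_apply_apply]
    rw [← hz, ← f.map_sub, MeasurableEquiv.symm_apply_apply]
  rwa [e1, e2, e3] at h3

lemma S_decrease' {A : Set (EuclideanSpace ℝ (Fin (m + 1)))} {R r : ℝ} (hA : MeasurableSet A)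
    (hAR : A ⊆ Metric.ball 0 R) :
    volume (f.S A \ Metric.ball 0 r) ≤ volume (A \ Metric.ball 0 r) := by
  have h0 : f.e 0 = (0, 0) := by
    have := f.map_sub 0 0
    rw [sub_self, sub_self] at this
    exact this
  exact le_self_add.trans (f.S_decrease hA hAR h0)

end Frame

set_option linter.unusedVariables false
set_option linter.unusedSectionVars false
set_option linter.deprecated false
open MeasureTheory Real Set
open scoped ENNReal

section
variable {m : ℕ}

/-- measure of the part of `A` outside of the ball of radius `r` -/
noncomputable def dd (A : Set (EuclideanSpace ℝ (Fin (m + 1)))) (r : ℝ) : ℝ :=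
  (volume (A \ Metric.ball 0 r)).toReal

/-- measurable sets inside the ball of radius `R`, with the measure of the ball of radius `r`. -/
def Adm (R r : ℝ) (A : Set (EuclideanSpace ℝ (Fin (m + 1)))) : Prop :=
  MeasurableSet A ∧ A ⊆ Metric.ball 0 R ∧
    volume A = volume (Metric.ball (0 : EuclideanSpace ℝ (Fin (m + 1))) r)

variable {A B C : Set (EuclideanSpace ℝ (Fin (m + 1)))} {R r a b c : ℝ}

lemma Adm.fin (h : Adm R r A) : volume A ≠ ⊤ := by
  rw [h.2.2]; exact measure_ball_lt_top.ne

lemma Adm.fin' (h : Adm R r A) : volume (A \ Metric.ball 0 r) ≠ ⊤ :=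
  ne_top_of_le_ne_top h.fin (measure_mono diff_subset)

lemma Adm.S (h : Adm R r A) (f : Frame m) : Adm R r (f.S A) :=
  ⟨f.measurableSet_S h.1, f.S_subset h.2.1, (f.volume_S h.1 h.2.1).trans h.2.2⟩

lemma Adm.dd_mono (h : Adm R r A) (f : Frame m) : dd (f.S A) r ≤ dd A r :=
  ENNReal.toReal_mono h.fin' (f.S_decrease' h.1 h.2.1)

lemma Adm.diff_eq (h : Adm R r A) :
    volume (Metric.ball 0 r \ A) = volume (A \ Metric.ball 0 r) := by
  have h2 := measure_inter_add_diff (μ := volume) A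
    (measurableSet_ball (x := (0 : EuclideanSpace ℝ (Fin (m + 1)))) (ε := r))
  have h3 := measure_inter_add_diff (μ := volume)
    (Metric.ball (0 : EuclideanSpace ℝ (Fin (m + 1))) r) h.1
  rw [← h.2.2, ← h2, inter_comm] at h3
  exact (ENNReal.add_right_inj (ne_top_of_le_ne_top h.fin (measure_mono inter_subset_left))).1 h3

lemma Adm.improve (h : Adm R r A) (hR : 0 < R) (hr : r ≤ R) (hd : 0 < dd A r) :
    ∃ f : Frame m, dd (f.S A) r + dd A r ^ 2 /
      (2 * (volume (Metric.ball (0 : EuclideanSpace ℝ (Fin (m + 1))) (2 * R))).toReal) ≤ dd A r := by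
  set V := volume (Metric.ball (0 : EuclideanSpace ℝ (Fin (m + 1))) (2 * R)) with hV
  have hV0 : V ≠ 0 := (Metric.measure_ball_pos _ _ (by positivity)).ne'
  have hVt : V ≠ ⊤ := measure_ball_lt_top.ne
  have hVr : 0 < V.toReal := ENNReal.toReal_pos hV0 hVt
  set X := A \ Metric.ball 0 r with hX
  set Y := Metric.ball 0 r \ A with hY
  have hXm : MeasurableSet X := h.1.diff measurableSet_ball
  have hYm : MeasurableSet Y := measurableSet_ball.diff h.1
  set κ := dd A r ^ 2 / (2 * V.toReal) with hκ
  have hκ0 : 0 < κ := by positivity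
  have hXd : volume X = ENNReal.ofReal (dd A r) := (ENNReal.ofReal_toReal h.fin').symm
  have hYd : volume Y = ENNReal.ofReal (dd A r) := by rw [hY, h.diff_eq, ← hX, hXd]
  obtain ⟨z, hz⟩ : ∃ z, ENNReal.ofReal κ < volume (ovl X Y z) := by
    by_contra hcon
    push Not at hcon
    have h1 := lintegral_ovl (μ := volume) hXm hYm
    have h2 : ∀ z, volume (ovl X Y z) ≤ ENNReal.ofReal κ * ind (Metric.ball 0 (2 * R)) z := by
      intro z
      by_cases hz : z ∈ Metric.ball (0 : EuclideanSpace ℝ (Fin (m + 1))) (2 * R)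
      · rw [ind_of_mem hz, mul_one]; exact hcon z
      · have : ovl X Y z = ∅ := by
          rw [eq_empty_iff_forall_notMem]
          rintro x ⟨hx1, hx2⟩
          apply hz
          have h3 := h.2.1 hx1.1
          have h4 := hx2.1
          simp only [Metric.mem_ball, dist_zero_right] at *
          calc ‖z‖ = ‖x - (x - z)‖ := by simp
            _ ≤ ‖x‖ + ‖x - z‖ := norm_sub_le _ _
            _ < 2 * R := by linarith
        simp [this]
    have h3 := lintegral_mono (μ := volume) h2
    rw [h1, lintegral_const_mul _ (measurable_ind measurableSet_ball),
      lintegral_ind measurableSet_ball, hXd, hYd, ← hV, ← ENNReal.ofReal_toReal hVt,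
      ← ENNReal.ofReal_mul hd.le, ← ENNReal.ofReal_mul hκ0.le,
      ENNReal.ofReal_le_ofReal_iff (by positivity), hκ] at h3
    have : dd A r ^ 2 / (2 * V.toReal) * V.toReal = dd A r ^ 2 / 2 := by field_simp
    rw [this] at h3
    nlinarith
  have hz0 : z ≠ 0 := by
    rintro rfl
    have : ovl X Y 0 = ∅ := by
      rw [eq_empty_iff_forall_notMem]
      rintro x ⟨hx1, hx2⟩
      simp only [sub_zero, mem_setOf_eq] at hx2
      exact hx1.2 hx2.1
    simp [this] at hz
  obtain ⟨f, hf⟩ := exists_frame m z hz0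
  refine ⟨f, ?_⟩
  have h1 := f.S_decrease (r := r) h.1 h.2.1 hf
  have h2 := (add_le_add le_rfl hz.le).trans h1
  have h3 := ENNReal.toReal_mono h.fin' h2
  rw [ENNReal.toReal_add (h.S f).fin' ENNReal.ofReal_ne_top, ENNReal.toReal_ofReal hκ0.le] at h3
  exact h3

/-- triples of admissible sets -/
def Adm3 (R a b c : ℝ) (A B C : Set (EuclideanSpace ℝ (Fin (m + 1)))) : Prop :=
  Adm R a A ∧ Adm R b B ∧ Adm R c C

lemma Adm3.step (h : Adm3 R a b c A B C) (hR : 0 < R) (ha : a ≤ R) (hb : b ≤ R) (hc : c ≤ R)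
    {δ : ℝ} (hδ : 0 < δ) (hT : δ ≤ dd A a + dd B b + dd C c) :
    ∃ f : Frame m, dd (f.S A) a + dd (f.S B) b + dd (f.S C) c + (δ / 3) ^ 2 /
      (2 * (volume (Metric.ball (0 : EuclideanSpace ℝ (Fin (m + 1))) (2 * R))).toReal) ≤
      dd A a + dd B b + dd C c := by
  obtain ⟨h1, h2, h3⟩ := h
  have key : ∀ {D : Set (EuclideanSpace ℝ (Fin (m + 1)))} {r : ℝ}, Adm R r D → r ≤ R →
      δ / 3 ≤ dd D r → ∃ f : Frame m, dd (f.S D) r + (δ / 3) ^ 2 /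
      (2 * (volume (Metric.ball (0 : EuclideanSpace ℝ (Fin (m + 1))) (2 * R))).toReal) ≤ dd D r := by
    intro D r hD hr hd
    obtain ⟨f, hf⟩ := hD.improve hR hr (by linarith)
    refine ⟨f, le_trans ?_ hf⟩
    gcongr
  by_cases c1 : δ / 3 ≤ dd A a
  · obtain ⟨f, hf⟩ := key h1 ha c1
    exact ⟨f, by linarith [h2.dd_mono f, h3.dd_mono f]⟩
  by_cases c2 : δ / 3 ≤ dd B b
  · obtain ⟨f, hf⟩ := key h2 hb c2
    exact ⟨f, by linarith [h1.dd_mono f, h3.dd_mono f]⟩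
  by_cases c3 : δ / 3 ≤ dd C c
  · obtain ⟨f, hf⟩ := key h3 hc c3
    exact ⟨f, by linarith [h1.dd_mono f, h2.dd_mono f]⟩
  linarith

lemma Adm3.approx (h : Adm3 R a b c A B C) (hR : 0 < R) (ha : a ≤ R) (hb : b ≤ R) (hc : c ≤ R)
    {δ : ℝ} (hδ : 0 < δ) :
    ∃ A' B' C' : Set (EuclideanSpace ℝ (Fin (m + 1))), Adm3 R a b c A' B' C' ∧
      riesz volume A B C ≤ riesz volume A' B' C' ∧ dd A' a + dd B' b + dd C' c < δ := by
  set η := (δ / 3) ^ 2 /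
      (2 * (volume (Metric.ball (0 : EuclideanSpace ℝ (Fin (m + 1))) (2 * R))).toReal) with hη
  have hη0 : 0 < η := by
    have : 0 < (volume (Metric.ball (0 : EuclideanSpace ℝ (Fin (m + 1))) (2 * R))).toReal :=
      ENNReal.toReal_pos (Metric.measure_ball_pos _ _ (by positivity)).ne' measure_ball_lt_top.ne
    positivity
  by_contra hcon
  push Not at hcon
  have hk : ∀ k : ℕ, ∃ A' B' C' : Set (EuclideanSpace ℝ (Fin (m + 1))), Adm3 R a b c A' B' C' ∧
      riesz volume A B C ≤ riesz volume A' B' C' ∧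
      dd A' a + dd B' b + dd C' c + k * η ≤ dd A a + dd B b + dd C c := by
    intro k
    induction k with
    | zero => exact ⟨A, B, C, h, le_rfl, by simp⟩
    | succ k ih =>
      obtain ⟨A', B', C', h1, h2, h3⟩ := ih
      obtain ⟨f, hf⟩ := h1.step hR ha hb hc hδ (hcon _ _ _ h1 h2)
      refine ⟨f.S A', f.S B', f.S C', ⟨h1.1.S f, h1.2.1.S f, h1.2.2.S f⟩, h2.trans
        (f.riesz_S h1.1.1 h1.2.1.1 h1.2.2.1 h1.1.2.1 h1.2.1.2.1 h1.2.2.2.1), ?_⟩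
      push_cast
      linarith
  obtain ⟨k, hk'⟩ := exists_nat_gt ((dd A a + dd B b + dd C c) / η)
  obtain ⟨A', B', C', -, -, h3⟩ := hk k
  rw [div_lt_iff₀ hη0] at hk'
  have : ∀ (D : Set (EuclideanSpace ℝ (Fin (m + 1)))) r, 0 ≤ dd D r :=
    fun _ _ => ENNReal.toReal_nonneg
  linarith [this A' a, this B' b, this C' c]

lemma riesz_perturb {A B C A₀ B₀ C₀ : Set (EuclideanSpace ℝ (Fin (m + 1)))}
    (hA : MeasurableSet A) (hB : MeasurableSet B) (hC : MeasurableSet C)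
    (hA₀ : MeasurableSet A₀) (hB₀ : MeasurableSet B₀) (hC₀ : MeasurableSet C₀) :
    riesz volume A B C ≤ riesz volume A₀ B₀ C₀ + volume (A \ A₀) * volume B
      + volume A * volume (B \ B₀) + volume A * volume (C \ C₀) := by
  have mA := measurable_ind hA
  have mB := measurable_ind hB
  have mC := measurable_ind hC
  have mA₀ := measurable_ind hA₀
  have mB₀ := measurable_ind hB₀
  have mC₀ := measurable_ind hC₀
  have mA1 := measurable_ind (hA.diff hA₀)
  have mB1 := measurable_ind (hB.diff hB₀)
  have mC1 := measurable_ind (hC.diff hC₀)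
  have e1 : ∀ {X Y : Set (EuclideanSpace ℝ (Fin (m + 1)))}, MeasurableSet X → MeasurableSet Y →
      volume X * volume Y = ∫⁻ x, ∫⁻ y, ind X x * ind Y y := by
    intro X Y hX hY
    simp_rw [lintegral_const_mul _ (measurable_ind hY), lintegral_ind hY]
    rw [lintegral_mul_const _ (measurable_ind hX), lintegral_ind hX]
  have e2 : volume A * volume (C \ C₀) = ∫⁻ x, ∫⁻ y, ind A x * ind (C \ C₀) (x - y) := by
    rw [e1 hA (hC.diff hC₀)]
    refine lintegral_congr fun x => ?_
    rw [lintegral_sub_left_eq_self (fun y => ind A x * ind (C \ C₀) y) x]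
  rw [e1 (hA.diff hA₀) hB, e1 hA (hB.diff hB₀), e2]
  unfold riesz
  rw [← lintegral_add_right, ← lintegral_add_right, ← lintegral_add_right]
  · refine lintegral_mono fun x => ?_
    rw [← lintegral_add_right, ← lintegral_add_right, ← lintegral_add_right]
    · refine lintegral_mono fun y => ?_
      by_cases a1 : x ∈ A
      · by_cases b1 : y ∈ B
        · by_cases c1 : x - y ∈ C
          · by_cases a2 : x ∈ A₀
            · by_cases b2 : y ∈ B₀
              · by_cases c2 : x - y ∈ C₀
                · simp [ind, a1, b1, c1, a2, b2, c2]
                · simp [ind, a1, b1, c1, a2, b2, c2]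
              · simp [ind, a1, b1, c1, a2, b2]
            · simp only [ind, a1, b1, c1, a2, mem_diff, indicator_of_mem, not_false_eq_true,
                and_self, mul_one, add_assoc]
              exact le_trans le_self_add le_add_self
          · simp [ind, c1]
        · simp [ind, b1]
      · simp [ind, a1]
    all_goals fun_prop
  all_goals
    refine Measurable.lintegral_prod_right ?_
    simp only [Function.uncurry_def]
    fun_prop

lemma Adm3.riesz_le (h : Adm3 R a b c A B C) (hR : 0 < R) (ha : a ≤ R) (hb : b ≤ R)
    (hc : c ≤ R) : riesz volume A B C ≤
      riesz volume (Metric.ball (0 : EuclideanSpace ℝ (Fin (m + 1))) a) (Metric.ball 0 b)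
        (Metric.ball 0 c) := by
  set α := (volume (Metric.ball (0 : EuclideanSpace ℝ (Fin (m + 1))) a)).toReal
  set β := (volume (Metric.ball (0 : EuclideanSpace ℝ (Fin (m + 1))) b)).toReal
  have hα : volume (Metric.ball (0 : EuclideanSpace ℝ (Fin (m + 1))) a) = ENNReal.ofReal α :=
    (ENNReal.ofReal_toReal measure_ball_lt_top.ne).symm
  have hβ : volume (Metric.ball (0 : EuclideanSpace ℝ (Fin (m + 1))) b) = ENNReal.ofReal β :=
    (ENNReal.ofReal_toReal measure_ball_lt_top.ne).symm
  have α0 : 0 ≤ α := ENNReal.toReal_nonneg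
  have β0 : 0 ≤ β := ENNReal.toReal_nonneg
  apply ENNReal.le_of_forall_pos_le_add
  intro ε hε _
  have hε' : (0 : ℝ) < ε := hε
  obtain ⟨A', B', C', h1, h2, h3⟩ := h.approx hR ha hb hc
    (δ := ε / (α + α + β + 1)) (by positivity)
  refine h2.trans ((riesz_perturb h1.1.1 h1.2.1.1 h1.2.2.1
    (measurableSet_ball (x := 0) (ε := a)) (measurableSet_ball (x := 0) (ε := b))
    (measurableSet_ball (x := 0) (ε := c))).trans ?_)
  rw [add_assoc, add_assoc]
  gcongr
  have dA : volume (A' \ Metric.ball 0 a) = ENNReal.ofReal (dd A' a) :=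
    (ENNReal.ofReal_toReal h1.1.fin').symm
  have dB : volume (B' \ Metric.ball 0 b) = ENNReal.ofReal (dd B' b) :=
    (ENNReal.ofReal_toReal h1.2.1.fin').symm
  have dC : volume (C' \ Metric.ball 0 c) = ENNReal.ofReal (dd C' c) :=
    (ENNReal.ofReal_toReal h1.2.2.fin').symm
  have nn : ∀ (D : Set (EuclideanSpace ℝ (Fin (m + 1)))) r, 0 ≤ dd D r :=
    fun _ _ => ENNReal.toReal_nonneg
  have nA := nn A' a
  have nB := nn B' b
  have nC := nn C' c
  rw [dA, dB, dC, h1.1.2.2, h1.2.1.2.2, hα, hβ, ← ENNReal.ofReal_mul nA,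
    ← ENNReal.ofReal_mul α0, ← ENNReal.ofReal_mul α0, ← ENNReal.ofReal_add (by positivity)
    (by positivity), ← ENNReal.ofReal_add (by positivity) (by positivity)]
  rw [← ENNReal.ofReal_coe_nnreal]
  apply ENNReal.ofReal_le_ofReal
  rw [lt_div_iff₀ (by positivity)] at h3
  nlinarith [mul_nonneg nA α0, mul_nonneg nA β0, mul_nonneg nB α0, mul_nonneg nB β0,
    mul_nonneg nC α0, mul_nonneg nC β0]

end

set_option linter.unusedVariables false
set_option linter.unusedSectionVars false
set_option linter.deprecated false
open MeasureTheory Real Set Filter Topology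
open scoped ENNReal

section
variable {m : ℕ}

lemma schwarzRadius_nonneg (n : ℕ) (A : Set (EuclideanSpace ℝ (Fin n))) :
    0 ≤ schwarzRadius n A := by
  unfold schwarzRadius; positivity

lemma volume_schwarzSet {A : Set (EuclideanSpace ℝ (Fin (m + 1)))} (hA : volume A ≠ ⊤) :
    volume (schwarzSet (m + 1) A) = volume A := by
  unfold schwarzSet
  rw [Measure.addHaar_ball _ _ (schwarzRadius_nonneg _ _)]
  simp only [finrank_euclideanSpace, Fintype.card_fin]
  unfold schwarzRadius
  rw [← Real.rpow_natCast, ← Real.rpow_mul (by positivity),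
    inv_mul_cancel₀ (by positivity), Real.rpow_one]
  have h0 : 0 < (volume (Metric.ball (0 : EuclideanSpace ℝ (Fin (m + 1))) 1)).toReal :=
    ENNReal.toReal_pos (Metric.measure_ball_pos _ _ one_pos).ne' measure_ball_lt_top.ne
  rw [← ENNReal.ofReal_toReal (a := volume (Metric.ball (0 : EuclideanSpace ℝ (Fin (m + 1))) 1))
    measure_ball_lt_top.ne, ← ENNReal.ofReal_mul (by positivity), ENNReal.toReal_ofReal h0.le,
    div_mul_cancel₀ _ h0.ne', ENNReal.ofReal_toReal hA]

lemma schwarzRadius_mono (n : ℕ) {A B : Set (EuclideanSpace ℝ (Fin n))}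
    (h : volume A ≤ volume B) (hB : volume B ≠ ⊤) :
    schwarzRadius n A ≤ schwarzRadius n B := by
  unfold schwarzRadius
  have := ENNReal.toReal_mono hB h
  gcongr

lemma schwarzSet_mono (n : ℕ) {A B : Set (EuclideanSpace ℝ (Fin n))}
    (h : volume A ≤ volume B) (hB : volume B ≠ ⊤) :
    schwarzSet n A ⊆ schwarzSet n B :=
  Metric.ball_subset_ball (schwarzRadius_mono n h hB)

lemma measurableSet_schwarzSet (n : ℕ) (A : Set (EuclideanSpace ℝ (Fin n))) :
    MeasurableSet (schwarzSet n A) := measurableSet_ball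

lemma riesz_mono {G : Type*} [Sub G] [MeasurableSpace G] {μ : Measure G} {A B C A' B' C' : Set G}
    (h1 : A ⊆ A') (h2 : B ⊆ B') (h3 : C ⊆ C') : riesz μ A B C ≤ riesz μ A' B' C' := by
  refine lintegral_mono fun x => lintegral_mono fun y => ?_
  exact mul_le_mul' (mul_le_mul' (ind_le_ind h1 _) (ind_le_ind h2 _)) (ind_le_ind h3 _)

lemma riesz_schwarz_bdd {A B C : Set (EuclideanSpace ℝ (Fin (m + 1)))} {R : ℝ}
    (hA : MeasurableSet A) (hB : MeasurableSet B) (hC : MeasurableSet C)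
    (hAR : A ⊆ Metric.ball 0 R) (hBR : B ⊆ Metric.ball 0 R) (hCR : C ⊆ Metric.ball 0 R) :
    riesz volume A B C ≤ riesz volume (schwarzSet (m + 1) A) (schwarzSet (m + 1) B)
      (schwarzSet (m + 1) C) := by
  set R' := |R| + 1 + schwarzRadius (m + 1) A + schwarzRadius (m + 1) B + schwarzRadius (m + 1) C
  have nA := schwarzRadius_nonneg (m + 1) A
  have nB := schwarzRadius_nonneg (m + 1) B
  have nC := schwarzRadius_nonneg (m + 1) C
  have nR := abs_nonneg R
  have hR : Metric.ball (0 : EuclideanSpace ℝ (Fin (m + 1))) R ⊆ Metric.ball 0 R' :=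
    Metric.ball_subset_ball (by linarith [le_abs_self R])
  have key : ∀ {D : Set (EuclideanSpace ℝ (Fin (m + 1)))}, MeasurableSet D →
      D ⊆ Metric.ball 0 R → Adm R' (schwarzRadius (m + 1) D) D := by
    intro D hD hDR
    refine ⟨hD, hDR.trans hR, ?_⟩
    exact (volume_schwarzSet (ne_top_of_le_ne_top measure_ball_lt_top.ne (measure_mono hDR))).symm
  exact Adm3.riesz_le (R := R') ⟨key hA hAR, key hB hBR, key hC hCR⟩ (by linarith) (by linarith)
    (by linarith) (by linarith)

lemma riesz_schwarz {A B C : Set (EuclideanSpace ℝ (Fin (m + 1)))}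
    (hA : MeasurableSet A) (hB : MeasurableSet B) (hC : MeasurableSet C)
    (fA : volume A ≠ ⊤) (fB : volume B ≠ ⊤) (fC : volume C ≠ ⊤) :
    riesz volume A B C ≤ riesz volume (schwarzSet (m + 1) A) (schwarzSet (m + 1) B)
      (schwarzSet (m + 1) C) := by
  set X := riesz volume (schwarzSet (m + 1) A) (schwarzSet (m + 1) B) (schwarzSet (m + 1) C)
  let b : ℕ → Set (EuclideanSpace ℝ (Fin (m + 1))) := fun k => Metric.ball 0 k
  have hb : ∀ k, MeasurableSet (b k) := fun k => measurableSet_ball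
  have h1 : ∀ k : ℕ, riesz volume A B C ≤ X + volume (A \ (A ∩ b k)) * volume B
      + volume A * volume (B \ (B ∩ b k)) + volume A * volume (C \ (C ∩ b k)) := by
    intro k
    refine (riesz_perturb hA hB hC (hA.inter (hb k)) (hB.inter (hb k)) (hC.inter (hb k))).trans ?_
    gcongr
    refine (riesz_schwarz_bdd (hA.inter (hb k)) (hB.inter (hb k)) (hC.inter (hb k))
      inter_subset_right inter_subset_right inter_subset_right).trans (riesz_mono ?_ ?_ ?_)
    · exact schwarzSet_mono _ (measure_mono inter_subset_left) fA
    · exact schwarzSet_mono _ (measure_mono inter_subset_left) fB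
    · exact schwarzSet_mono _ (measure_mono inter_subset_left) fC
  have h2 : ∀ {D : Set (EuclideanSpace ℝ (Fin (m + 1)))}, MeasurableSet D → volume D ≠ ⊤ →
      Tendsto (fun k => volume (D \ (D ∩ b k))) atTop (𝓝 0) := by
    intro D hD fD
    have h3 : ⋂ k, D \ (D ∩ b k) = ∅ := by
      rw [eq_empty_iff_forall_notMem]
      intro x hx
      rw [mem_iInter] at hx
      obtain ⟨k, hk⟩ := exists_nat_gt ‖x‖
      exact (hx k).2 ⟨(hx k).1, by simpa [b] using hk⟩
    have h4 := tendsto_measure_iInter_atTop (μ := volume) (s := fun k => D \ (D ∩ b k))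
      (fun k => (hD.diff (hD.inter (hb k))).nullMeasurableSet) (by
        intro i j hij
        apply diff_subset_diff_right
        apply inter_subset_inter_right
        exact Metric.ball_subset_ball (by exact_mod_cast hij))
      ⟨0, ne_top_of_le_ne_top fD (measure_mono diff_subset)⟩
    rwa [h3, measure_empty] at h4
  have h5 : Tendsto (fun k => X + volume (A \ (A ∩ b k)) * volume B
      + volume A * volume (B \ (B ∩ b k)) + volume A * volume (C \ (C ∩ b k))) atTop
      (𝓝 (X + 0 * volume B + volume A * 0 + volume A * 0)) := by
    refine ((tendsto_const_nhds.add ?_).add ?_).add ?_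
    · exact ENNReal.Tendsto.mul_const (h2 hA fA) (Or.inr fB)
    · exact ENNReal.Tendsto.const_mul (h2 hB fB) (Or.inr fA)
    · exact ENNReal.Tendsto.const_mul (h2 hC fC) (Or.inr fA)
  simp only [zero_mul, mul_zero, add_zero] at h5
  exact ge_of_tendsto' h5 h1

/-! ### Functions -/

variable {n : ℕ}

/-- level sets -/
def lev (u : EuclideanSpace ℝ (Fin n) → ℝ) (t : ℝ) : Set (EuclideanSpace ℝ (Fin n)) :=
  {y | t < |u y|}

lemma lev_anti (u : EuclideanSpace ℝ (Fin n) → ℝ) {s t : ℝ} (h : s ≤ t) : lev u t ⊆ lev u s :=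
  fun _ hx => lt_of_le_of_lt h hx

/-- the radius of level sets is a measurable function of the level -/
lemma measurable_radius (u : EuclideanSpace ℝ (Fin n) → ℝ) :
    Measurable (fun t => schwarzRadius n (lev u t)) := by
  have h : Antitone (fun t => volume (lev u t)) := fun s t h => measure_mono (lev_anti u h)
  have h2 := h.measurable.ennreal_toReal
  unfold schwarzRadius
  exact (h2.div_const _).pow_const _

lemma schwarzRearr_eq (u : EuclideanSpace ℝ (Fin n) → ℝ) (x : EuclideanSpace ℝ (Fin n)) :
    schwarzRearr n u x = (volume {t | 0 < t ∧ x ∈ schwarzSet n (lev u t)}).toReal := by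
  unfold schwarzRearr
  have h1 : (fun t => (schwarzSet n {y | t < |u y|}).indicator (fun _ => (1 : ℝ)) x) =
      {t | x ∈ schwarzSet n (lev u t)}.indicator (fun _ => (1 : ℝ)) := by
    ext t; rfl
  have hm : MeasurableSet {t | x ∈ schwarzSet n (lev u t)} := by
    have : {t | x ∈ schwarzSet n (lev u t)} = {t | ‖x‖ < schwarzRadius n (lev u t)} := by
      ext t; simp [schwarzSet]
    rw [this]
    exact measurableSet_lt measurable_const (measurable_radius u)
  rw [h1, integral_indicator hm, Measure.restrict_restrict hm]
  simp only [integral_const, smul_eq_mul, mul_one, Measure.real, Measure.restrict_apply_univ]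
  congr 2
  ext t; simp [and_comm]

lemma measurable_schwarzRearr (u : EuclideanSpace ℝ (Fin n) → ℝ) :
    Measurable (schwarzRearr n u) := by
  have : schwarzRearr n u =
      fun x => (volume (Prod.mk x ⁻¹' {p : EuclideanSpace ℝ (Fin n) × ℝ |
        0 < p.2 ∧ ‖p.1‖ < schwarzRadius n (lev u p.2)})).toReal := by
    ext x
    rw [schwarzRearr_eq]
    congr 2
    ext t
    simp [schwarzSet]
  rw [this]
  refine (measurable_measure_prodMk_left ?_).ennreal_toReal
  refine MeasurableSet.inter (measurableSet_lt measurable_const measurable_snd) ?_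
  exact measurableSet_lt (by fun_prop) ((measurable_radius u).comp measurable_snd)

lemma schwarzRearr_nonneg (u : EuclideanSpace ℝ (Fin n) → ℝ) (x : EuclideanSpace ℝ (Fin n)) :
    0 ≤ schwarzRearr n u x := by
  rw [schwarzRearr_eq]; positivity

/-- membership in Schwarz symmetrization in terms of measures -/
lemma mem_schwarzSet_iff {A : Set (EuclideanSpace ℝ (Fin (m + 1)))} (hA : volume A ≠ ⊤)
    (x : EuclideanSpace ℝ (Fin (m + 1))) :
    x ∈ schwarzSet (m + 1) A ↔ volume (Metric.ball (0 : EuclideanSpace ℝ (Fin (m + 1))) ‖x‖)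
      < volume A := by
  rw [← volume_schwarzSet hA]
  unfold schwarzSet
  rw [Measure.addHaar_ball _ _ (schwarzRadius_nonneg _ _), Measure.addHaar_ball _ _ (norm_nonneg _),
    ENNReal.mul_lt_mul_iff_left (Metric.measure_ball_pos _ _ one_pos).ne' measure_ball_lt_top.ne,
    ENNReal.ofReal_lt_ofReal_iff_of_nonneg (by positivity)]
  simp only [finrank_euclideanSpace, Fintype.card_fin]
  rw [pow_lt_pow_iff_left₀ (norm_nonneg _) (schwarzRadius_nonneg _ _) (by simp)]
  simp

/-- level sets of the rearrangement, away from the origin -/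
lemma lt_schwarzRearr_iff {u : EuclideanSpace ℝ (Fin (m + 1)) → ℝ} (hu : AEMeasurable u)
    (hfin : ∀ t, 0 < t → volume (lev u t) ≠ ⊤) {x : EuclideanSpace ℝ (Fin (m + 1))} (hx : x ≠ 0)
    {t : ℝ} (ht : 0 < t) :
    t < schwarzRearr (m + 1) u x ↔ x ∈ schwarzSet (m + 1) (lev u t) := by
  set L := {t | 0 < t ∧ x ∈ schwarzSet (m + 1) (lev u t)} with hL
  have hLiff : ∀ t, t ∈ L ↔ 0 < t ∧
      volume (Metric.ball (0 : EuclideanSpace ℝ (Fin (m + 1))) ‖x‖) < volume (lev u t) := by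
    intro t
    constructor
    · rintro ⟨h1, h2⟩; exact ⟨h1, (mem_schwarzSet_iff (hfin t h1) x).1 h2⟩
    · rintro ⟨h1, h2⟩; exact ⟨h1, (mem_schwarzSet_iff (hfin t h1) x).2 h2⟩
  have hdown : ∀ {s t}, 0 < s → s ≤ t → t ∈ L → s ∈ L := by
    intro s t hs hst htL
    rw [hLiff] at *
    exact ⟨hs, htL.2.trans_le (measure_mono (lev_anti u hst))⟩
  have hnull : ∀ t, NullMeasurableSet (lev u t) := fun t =>
    nullMeasurableSet_lt aemeasurable_const hu.norm
  have hpos : 0 < volume (Metric.ball (0 : EuclideanSpace ℝ (Fin (m + 1))) ‖x‖) :=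
    Metric.measure_ball_pos _ _ (norm_pos_iff.2 hx)
  -- bounded
  obtain ⟨M, hM⟩ : ∃ M : ℕ, L ⊆ Ioo 0 ((M : ℝ) + 1) := by
    have h4 := tendsto_measure_iInter_atTop (μ := volume) (s := fun k : ℕ => lev u ((k : ℝ) + 1))
      (fun k => hnull _) (by
        intro i j hij
        exact lev_anti u (by gcongr))
      ⟨0, hfin _ (by positivity)⟩
    have h3 : ⋂ k : ℕ, lev u ((k : ℝ) + 1) = ∅ := by
      rw [eq_empty_iff_forall_notMem]
      intro y hy
      rw [mem_iInter] at hy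
      obtain ⟨k, hk⟩ := exists_nat_gt (|u y|)
      have : (k : ℝ) + 1 < |u y| := hy k
      linarith
    rw [h3, measure_empty] at h4
    obtain ⟨M, hM⟩ := (h4.eventually (gt_mem_nhds hpos)).exists
    refine ⟨M, fun t htL => ⟨htL.1, ?_⟩⟩
    by_contra hcon
    have := (hLiff _).1 (hdown (by positivity) (not_lt.1 hcon) htL)
    exact absurd this.2 (not_lt.2 hM.le)
  have hLfin : volume L ≠ ⊤ := ne_top_of_le_ne_top (by simp) (measure_mono hM)
  rw [schwarzRearr_eq, ← hL]
  constructor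
  · intro h
    by_contra hcon
    have h1 : L ⊆ Ioo 0 t := by
      intro s hs
      refine ⟨hs.1, ?_⟩
      by_contra h'
      exact hcon (hdown ht (not_lt.1 h') hs).2
    have h2 := ENNReal.toReal_mono (by simp) (measure_mono (μ := volume) h1)
    rw [Real.volume_Ioo, ENNReal.toReal_ofReal (by linarith)] at h2
    linarith
  · intro h
    have hx2 := (mem_schwarzSet_iff (hfin t ht) x).1 h
    have h4 := tendsto_measure_iUnion_atTop (μ := volume)
      (s := fun k : ℕ => lev u (t + 1 / ((k : ℝ) + 1))) (by
        intro i j hij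
        exact lev_anti u (by gcongr))
    have h3 : ⋃ k : ℕ, lev u (t + 1 / ((k : ℝ) + 1)) = lev u t := by
      ext y
      rw [mem_iUnion]
      constructor
      · rintro ⟨k, hk⟩
        refine lev_anti u ?_ hk
        have : (0 : ℝ) ≤ 1 / ((k : ℝ) + 1) := by positivity
        linarith
      · intro hy
        have hy' : 0 < |u y| - t := sub_pos.2 hy
        obtain ⟨k, hk⟩ := exists_nat_one_div_lt hy'
        exact ⟨k, show t + 1 / ((k : ℝ) + 1) < |u y| by linarith⟩
    rw [h3] at h4
    obtain ⟨k, hk⟩ := (h4.eventually (lt_mem_nhds hx2)).exists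
    have hk0 : (0 : ℝ) < 1 / ((k : ℝ) + 1) := by positivity
    have h5 : Ioc 0 (t + 1 / ((k : ℝ) + 1)) ⊆ L := by
      intro s hs
      exact hdown hs.1 hs.2 ((hLiff _).2 ⟨by positivity, hk⟩)
    have h6 := ENNReal.toReal_mono hLfin (measure_mono (μ := volume) h5)
    rw [Real.volume_Ioc, ENNReal.toReal_ofReal (by linarith)] at h6
    linarith

end

set_option linter.unusedVariables false
set_option linter.unusedSectionVars false
set_option linter.deprecated false
open MeasureTheory Real Set Filter Topology
open scoped ENNReal

section swap
variable {E : Type*} [MeasurableSpace E] {μ : Measure E} [SFinite μ]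

lemma swap3 {F : ℝ → E → E → ℝ≥0∞} (hF : Measurable fun p : E × E × ℝ => F p.2.2 p.1 p.2.1)
    (ν : Measure ℝ) [SFinite ν] :
    ∫⁻ x, ∫⁻ y, ∫⁻ r, F r x y ∂ν ∂μ ∂μ = ∫⁻ r, ∫⁻ x, ∫⁻ y, F r x y ∂μ ∂μ ∂ν := by
  have h1 : ∀ x, ∫⁻ y, ∫⁻ r, F r x y ∂ν ∂μ = ∫⁻ r, ∫⁻ y, F r x y ∂μ ∂ν := by
    intro x
    refine lintegral_lintegral_swap (Measurable.aemeasurable ?_)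
    exact hF.comp (measurable_const.prodMk (measurable_fst.prodMk measurable_snd))
  simp_rw [h1]
  refine lintegral_lintegral_swap (Measurable.aemeasurable ?_)
  have : Measurable (fun q : (E × ℝ) × E => F q.1.2 q.1.1 q.2) :=
    hF.comp (measurable_fst.fst.prodMk (measurable_snd.prodMk measurable_fst.snd))
  exact this.lintegral_prod_right'

end swap

lemma ofReal_layer (w : ℝ) :
    ENNReal.ofReal w = ∫⁻ r in Ioi (0 : ℝ), ind {r : ℝ | r < w} r := by
  have hm : MeasurableSet {r : ℝ | r < w} := measurableSet_Iio
  rw [lintegral_ind hm, Measure.restrict_apply hm]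
  have : {r : ℝ | r < w} ∩ Ioi 0 = Ioo 0 w := by ext; simp [and_comm]
  rw [this, Real.volume_Ioo, sub_zero]

/-- Splitting of `(p - q - σ)₊`. -/
lemma ofReal_split {p q σ : ℝ} (hq : 0 ≤ q) :
    ENNReal.ofReal (p - q - σ)
      = ∫⁻ t in Ioi (0 : ℝ), ind {t : ℝ | t + σ < p} t * ind {t : ℝ | q ≤ t} t := by
  simp_rw [ind_mul]
  have hm : MeasurableSet ({t : ℝ | t + σ < p} ∩ {t : ℝ | q ≤ t}) :=
    (measurableSet_lt (by fun_prop) (by fun_prop)).inter measurableSet_Ici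
  rw [lintegral_ind hm, Measure.restrict_apply hm]
  apply le_antisymm
  · have : Ioo q (p - σ) ⊆ ({t : ℝ | t + σ < p} ∩ {t : ℝ | q ≤ t}) ∩ Ioi 0 := by
      rintro t ⟨h1, h2⟩
      exact ⟨⟨show t + σ < p by linarith, h1.le⟩, hq.trans_lt h1⟩
    refine le_trans (le_of_eq ?_) (measure_mono this)
    rw [Real.volume_Ioo]; congr 1; ring
  · have : ({t : ℝ | t + σ < p} ∩ {t : ℝ | q ≤ t}) ∩ Ioi 0 ⊆ Ico q (p - σ) := by
      rintro t ⟨⟨h1, h2⟩, h3⟩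
      have h1 : t + σ < p := h1
      exact ⟨h2, by linarith⟩
    refine (measure_mono this).trans (le_of_eq ?_)
    rw [Real.volume_Ico]; congr 1; ring

section fn
variable {m : ℕ}

/-- Riesz functional with a weight. -/
noncomputable def QQ (A B : Set (EuclideanSpace ℝ (Fin (m + 1))))
    (G : EuclideanSpace ℝ (Fin (m + 1)) → ℝ≥0∞) : ℝ≥0∞ :=
  ∫⁻ x, ∫⁻ y, ind A x * ind B y * G (x - y)

lemma ae_sub {p : EuclideanSpace ℝ (Fin (m + 1)) → Prop} (h : ∀ᵐ z, p z)
    (x : EuclideanSpace ℝ (Fin (m + 1))) : ∀ᵐ y, p (x - y) :=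
  (Measure.measurePreserving_sub_left volume x).quasiMeasurePreserving.ae h

lemma QQ_congr {A B A' B' : Set (EuclideanSpace ℝ (Fin (m + 1)))}
    {G G' : EuclideanSpace ℝ (Fin (m + 1)) → ℝ≥0∞}
    (hA : ∀ᵐ x, x ∈ A ↔ x ∈ A') (hB : ∀ᵐ x, x ∈ B ↔ x ∈ B') (hG : ∀ᵐ x, G x = G' x) :
    QQ A B G = QQ A' B' G' := by
  unfold QQ
  have key : ∀ {S T : Set (EuclideanSpace ℝ (Fin (m + 1)))} {x}, (x ∈ S ↔ x ∈ T) →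
      ind S x = ind T x := by
    intro S T x h
    by_cases hx : x ∈ S
    · rw [ind_of_mem hx, ind_of_mem (h.1 hx)]
    · rw [ind_of_notMem hx, ind_of_notMem (fun h' => hx (h.2 h'))]
  refine lintegral_congr_ae ?_
  filter_upwards [hA] with x hx
  refine lintegral_congr_ae ?_
  filter_upwards [hB, ae_sub hG x] with y hy hz
  rw [key hx, key hy, hz]

lemma QQ_layer {A B : Set (EuclideanSpace ℝ (Fin (m + 1)))} (hA : MeasurableSet A)
    (hB : MeasurableSet B) {h : EuclideanSpace ℝ (Fin (m + 1)) → ℝ} (hh : Measurable h) :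
    QQ A B (fun z => ENNReal.ofReal (h z)) = ∫⁻ r in Ioi (0 : ℝ), QQ A B (ind {z | r < h z}) := by
  unfold QQ
  have mA := measurable_ind hA
  have mB := measurable_ind hB
  have hS : MeasurableSet {p : EuclideanSpace ℝ (Fin (m + 1)) × ℝ | p.2 < h p.1} :=
    measurableSet_lt measurable_snd (hh.comp measurable_fst)
  have mS := measurable_ind hS
  have e1 : ∀ z r, ind {r : ℝ | r < h z} r
      = ind {p : EuclideanSpace ℝ (Fin (m + 1)) × ℝ | p.2 < h p.1} (z, r) := by
    intro z r; simp [ind, indicator]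
  have e2 : ∀ z r, ind {z | r < h z} z
      = ind {p : EuclideanSpace ℝ (Fin (m + 1)) × ℝ | p.2 < h p.1} (z, r) := by
    intro z r; simp [ind, indicator]
  simp_rw [ofReal_layer, e1, e2]
  rw [← swap3]
  · refine lintegral_congr fun x => lintegral_congr fun y => ?_
    rw [lintegral_const_mul]
    exact mS.comp (measurable_const.prodMk measurable_id)
  · refine ((mA.comp measurable_fst).mul (mB.comp measurable_snd.fst)).mul ?_
    exact mS.comp ((measurable_fst.sub measurable_snd.fst).prodMk measurable_snd.snd)

lemma ae_ne_zero : ∀ᵐ x : EuclideanSpace ℝ (Fin (m + 1)), x ≠ 0 := by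
  simp [ae_iff]

lemma ae_lev {u : EuclideanSpace ℝ (Fin (m + 1)) → ℝ} (hu : AEMeasurable u)
    (hfin : ∀ t, 0 < t → volume (lev u t) ≠ ⊤) {t : ℝ} (ht : 0 < t) :
    ∀ᵐ x, x ∈ {x | t < schwarzRearr (m + 1) u x} ↔ x ∈ schwarzSet (m + 1) (lev u t) := by
  filter_upwards [ae_ne_zero] with x hx
  exact lt_schwarzRearr_iff hu hfin hx ht

lemma lev_eq {u : EuclideanSpace ℝ (Fin (m + 1)) → ℝ} (h0 : ∀ x, 0 ≤ u x) (t : ℝ) :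
    lev u t = {x | t < u x} := by
  ext x; simp [lev, abs_of_nonneg (h0 x)]

lemma ind_congr_ae {S T : Set (EuclideanSpace ℝ (Fin (m + 1)))} (h : ∀ᵐ x, x ∈ S ↔ x ∈ T) :
    ∀ᵐ x, ind S x = ind T x := by
  filter_upwards [h] with x hx
  by_cases h1 : x ∈ S
  · rw [ind_of_mem h1, ind_of_mem (hx.1 h1)]
  · rw [ind_of_notMem h1, ind_of_notMem (fun h' => h1 (hx.2 h'))]

lemma QQ_le {A B : Set (EuclideanSpace ℝ (Fin (m + 1)))} (hA : MeasurableSet A)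
    (hB : MeasurableSet B) (fA : volume A ≠ ⊤) (fB : volume B ≠ ⊤)
    {g : EuclideanSpace ℝ (Fin (m + 1)) → ℝ} (hg : Measurable g) (hg0 : ∀ x, 0 ≤ g x)
    (hfin : ∀ t, 0 < t → volume (lev g t) ≠ ⊤) :
    QQ A B (fun z => ENNReal.ofReal (g z)) ≤
      QQ (schwarzSet (m + 1) A) (schwarzSet (m + 1) B)
        (fun z => ENNReal.ofReal (schwarzRearr (m + 1) g z)) := by
  rw [QQ_layer hA hB hg, QQ_layer (measurableSet_schwarzSet _ _) (measurableSet_schwarzSet _ _)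
    (measurable_schwarzRearr g)]
  refine setLIntegral_mono' measurableSet_Ioi fun r hr => ?_
  have hr : 0 < r := hr
  have e := QQ_congr (A := schwarzSet (m + 1) A) (B := schwarzSet (m + 1) B)
    (Eventually.of_forall fun _ => Iff.rfl) (Eventually.of_forall fun _ => Iff.rfl)
    (ind_congr_ae (ae_lev hg.aemeasurable hfin hr))
  rw [e, ← lev_eq hg0]
  refine riesz_schwarz hA hB ?_ fA fB (hfin r hr)
  rw [lev_eq hg0]
  exact measurableSet_lt measurable_const hg

lemma lintegral_schwarzRearr
    {g : EuclideanSpace ℝ (Fin (m + 1)) → ℝ} (hg : Measurable g) (hg0 : ∀ x, 0 ≤ g x)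
    (hfin : ∀ t, 0 < t → volume (lev g t) ≠ ⊤) :
    ∫⁻ z, ENNReal.ofReal (schwarzRearr (m + 1) g z) = ∫⁻ z, ENNReal.ofReal (g z) := by
  rw [lintegral_eq_lintegral_meas_lt _ (Eventually.of_forall hg0) hg.aemeasurable,
    lintegral_eq_lintegral_meas_lt _ (Eventually.of_forall (schwarzRearr_nonneg g))
      (measurable_schwarzRearr g).aemeasurable]
  refine setLIntegral_congr_fun measurableSet_Ioi fun r hr => ?_
  have hr : 0 < r := hr
  have := measure_congr (μ := volume) (s := {x | r < schwarzRearr (m + 1) g x})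
    (t := schwarzSet (m + 1) (lev g r)) (by
      filter_upwards [ae_lev hg.aemeasurable hfin hr] with x hx
      exact propext hx)
  rw [this, volume_schwarzSet (hfin r hr), lev_eq hg0]

lemma QQ_add_compl {A B : Set (EuclideanSpace ℝ (Fin (m + 1)))} (hA : MeasurableSet A)
    (hB : MeasurableSet B) {G : EuclideanSpace ℝ (Fin (m + 1)) → ℝ≥0∞} (hG : Measurable G) :
    QQ A B G + QQ A Bᶜ G = volume A * ∫⁻ z, G z := by
  have mA := measurable_ind hA
  have mB := measurable_ind hB
  have mB' := measurable_ind hB.compl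
  unfold QQ
  have hm : Measurable fun p : EuclideanSpace ℝ (Fin (m + 1)) × EuclideanSpace ℝ (Fin (m + 1)) =>
      ind A p.1 * ind B p.2 * G (p.1 - p.2) := by fun_prop
  rw [← lintegral_add_left hm.lintegral_prod_right']
  have : ∀ x, (∫⁻ y, ind A x * ind B y * G (x - y)) + (∫⁻ y, ind A x * ind Bᶜ y * G (x - y))
      = ind A x * ∫⁻ z, G z := by
    intro x
    rw [← lintegral_add_left (by fun_prop), ← lintegral_sub_left_eq_self G x,
      ← lintegral_const_mul _ (by fun_prop)]
    refine lintegral_congr fun y => ?_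
    by_cases h : y ∈ B
    · rw [ind_of_mem h, ind_of_notMem (show y ∉ Bᶜ by simpa using h)]; simp
    · rw [ind_of_notMem h, ind_of_mem (show y ∈ Bᶜ by simpa using h)]; simp
  simp_rw [this]
  rw [lintegral_mul_const _ mA, lintegral_ind hA]

lemma QQ_compl_le {A B : Set (EuclideanSpace ℝ (Fin (m + 1)))} (hA : MeasurableSet A)
    (hB : MeasurableSet B) (fA : volume A ≠ ⊤) (fB : volume B ≠ ⊤)
    {g : EuclideanSpace ℝ (Fin (m + 1)) → ℝ} (hg : Measurable g) (hg0 : ∀ x, 0 ≤ g x)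
    (hfin : ∀ t, 0 < t → volume (lev g t) ≠ ⊤) (hgi : ∫⁻ z, ENNReal.ofReal (g z) ≠ ⊤) :
    QQ (schwarzSet (m + 1) A) (schwarzSet (m + 1) B)ᶜ
        (fun z => ENNReal.ofReal (schwarzRearr (m + 1) g z)) ≤
      QQ A Bᶜ (fun z => ENNReal.ofReal (g z)) := by
  have h1 := QQ_add_compl hA hB hg.ennreal_ofReal
  have h2 := QQ_add_compl (measurableSet_schwarzSet (m + 1) A) (measurableSet_schwarzSet (m + 1) B)
    (measurable_schwarzRearr g).ennreal_ofReal
  rw [volume_schwarzSet fA, lintegral_schwarzRearr hg hg0 hfin, ← h1] at h2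
  have h3 := QQ_le hA hB fA fB hg hg0 hfin
  have h4 : QQ A B (fun z => ENNReal.ofReal (g z)) ≠ ⊤ := by
    refine ne_top_of_le_ne_top (ENNReal.mul_ne_top fA hgi) (h1 ▸ le_self_add)
  have h5 : QQ A B (fun z => ENNReal.ofReal (g z)) + QQ (schwarzSet (m + 1) A)
      (schwarzSet (m + 1) B)ᶜ (fun z => ENNReal.ofReal (schwarzRearr (m + 1) g z)) ≤
      QQ A B (fun z => ENNReal.ofReal (g z)) + QQ A Bᶜ (fun z => ENNReal.ofReal (g z)) := by
    rw [← h2]; gcongr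
  exact (ENNReal.add_le_add_iff_left h4).1 h5

/-- The functional with kernel `(u x - v y - σ)₊`. -/
noncomputable def MM (σ : ℝ) (u v g : EuclideanSpace ℝ (Fin (m + 1)) → ℝ) : ℝ≥0∞ :=
  ∫⁻ x, ∫⁻ y, ENNReal.ofReal (u x - v y - σ) * ENNReal.ofReal (g (x - y))

lemma MM_eq {σ : ℝ} {u v g : EuclideanSpace ℝ (Fin (m + 1)) → ℝ} (hu : Measurable u)
    (hv : Measurable v) (hg : Measurable g) (hv0 : ∀ x, 0 ≤ v x) :
    MM σ u v g = ∫⁻ t in Ioi (0 : ℝ), QQ {x | t + σ < u x} {x | t < v x}ᶜ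
      (fun z => ENNReal.ofReal (g z)) := by
  unfold MM QQ
  have hS : MeasurableSet {p : EuclideanSpace ℝ (Fin (m + 1)) × ℝ | p.2 + σ < u p.1} :=
    measurableSet_lt (by fun_prop) (hu.comp measurable_fst)
  have hT : MeasurableSet {p : EuclideanSpace ℝ (Fin (m + 1)) × ℝ | v p.1 ≤ p.2} :=
    measurableSet_le (hv.comp measurable_fst) (by fun_prop)
  have mS := measurable_ind hS
  have mT := measurable_ind hT
  have e1 : ∀ x t, ind {t : ℝ | t + σ < u x} t
      = ind {p : EuclideanSpace ℝ (Fin (m + 1)) × ℝ | p.2 + σ < u p.1} (x, t) := by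
    intro z r; simp [ind, indicator]
  have e2 : ∀ x t, ind {x | t + σ < u x} x
      = ind {p : EuclideanSpace ℝ (Fin (m + 1)) × ℝ | p.2 + σ < u p.1} (x, t) := by
    intro z r; simp [ind, indicator]
  have e3 : ∀ x t, ind {t : ℝ | v x ≤ t} t
      = ind {p : EuclideanSpace ℝ (Fin (m + 1)) × ℝ | v p.1 ≤ p.2} (x, t) := by
    intro z r; simp [ind, indicator]
  have e4 : ∀ x t, ind {x | t < v x}ᶜ x
      = ind {p : EuclideanSpace ℝ (Fin (m + 1)) × ℝ | v p.1 ≤ p.2} (x, t) := by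
    intro z r
    by_cases h : r < v z
    · simp [ind, indicator, h]
    · simp [ind, indicator, h, not_lt.1 h]
  simp_rw [ofReal_split (hv0 _), e1, e2, e3, e4]
  rw [← swap3]
  · refine lintegral_congr fun x => lintegral_congr fun y => ?_
    rw [lintegral_mul_const]
    exact (mS.comp (measurable_const.prodMk measurable_id)).mul
      (mT.comp (measurable_const.prodMk measurable_id))
  · refine Measurable.mul (Measurable.mul (mS.comp (measurable_fst.prodMk measurable_snd.snd))
      (mT.comp measurable_snd)) ?_
    fun_prop

lemma MM_le {σ : ℝ} (hσ : 0 ≤ σ) {u v g : EuclideanSpace ℝ (Fin (m + 1)) → ℝ} (hu : Measurable u)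
    (hv : Measurable v) (hg : Measurable g) (hu0 : ∀ x, 0 ≤ u x) (hv0 : ∀ x, 0 ≤ v x)
    (hg0 : ∀ x, 0 ≤ g x)
    (fu : ∀ t, 0 < t → volume (lev u t) ≠ ⊤) (fv : ∀ t, 0 < t → volume (lev v t) ≠ ⊤)
    (fg : ∀ t, 0 < t → volume (lev g t) ≠ ⊤) (hgi : ∫⁻ z, ENNReal.ofReal (g z) ≠ ⊤) :
    MM σ (schwarzRearr (m + 1) u) (schwarzRearr (m + 1) v) (schwarzRearr (m + 1) g)
      ≤ MM σ u v g := by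
  rw [MM_eq hu hv hg hv0, MM_eq (measurable_schwarzRearr u) (measurable_schwarzRearr v)
    (measurable_schwarzRearr g) (schwarzRearr_nonneg v)]
  refine setLIntegral_mono' measurableSet_Ioi fun t ht => ?_
  have ht : 0 < t := ht
  have ht2 : 0 < t + σ := by linarith
  have e := QQ_congr (A := {x | t + σ < schwarzRearr (m + 1) u x})
    (B := {x | t < schwarzRearr (m + 1) v x}ᶜ) (B' := (schwarzSet (m + 1) (lev v t))ᶜ)
    (G := fun z => ENNReal.ofReal (schwarzRearr (m + 1) g z))
    (ae_lev hu.aemeasurable fu ht2)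
    (by
      filter_upwards [ae_lev hv.aemeasurable fv ht] with x hx
      exact not_congr hx)
    (Eventually.of_forall fun _ => rfl)
  rw [e]
  have := QQ_compl_le (A := lev u (t + σ)) (B := lev v t)
    (by rw [lev_eq hu0]; exact measurableSet_lt measurable_const hu)
    (by rw [lev_eq hv0]; exact measurableSet_lt measurable_const hv)
    (fu _ ht2) (fv _ ht) hg hg0 fg hgi
  rw [← lev_eq hu0, ← lev_eq hv0]
  exact this

end fn

set_option linter.unusedVariables false
set_option linter.unusedSectionVars false
set_option linter.deprecated false
open MeasureTheory Real Set Filter Topology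
open scoped ENNReal

/-- right derivative -/
noncomputable def rD (J : ℝ → ℝ) (r : ℝ) : ℝ := derivWithin J (Ioi r) r

lemma rD_mono {J : ℝ → ℝ} (hJ : ConvexOn ℝ univ J) : Monotone (rD J) := by
  have := hJ.monotoneOn_rightDeriv
  rw [interior_univ] at this
  intro a b hab
  exact this (mem_univ _) (mem_univ _) hab

lemma rD_nonneg {J : ℝ → ℝ} (hJ : ConvexOn ℝ univ J) (h0 : ∀ t, 0 ≤ J t) (hz : J 0 = 0)
    {r : ℝ} (hr : 0 ≤ r) : 0 ≤ rD J r := by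
  refine le_trans ?_ (rD_mono hJ hr)
  unfold rD
  rw [hJ.rightDeriv_eq_sInf_slope_of_mem_interior (by simp)]
  apply Real.sInf_nonneg
  rintro _ ⟨y, hy, rfl⟩
  have hy : 0 < y := hy.2
  rw [slope_def_field, hz]
  exact div_nonneg (by simpa using h0 y) (by linarith)

lemma rD_integral {J : ℝ → ℝ} (hJ : ConvexOn ℝ univ J) (h0 : ∀ t, 0 ≤ J t) (hz : J 0 = 0)
    {w : ℝ} (hw : 0 ≤ w) : ∫⁻ r in Ioo 0 w, ENNReal.ofReal (rD J r) = ENNReal.ofReal (J w) := by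
  have hi : IntervalIntegrable (rD J) volume 0 w := (rD_mono hJ).intervalIntegrable
  have h1 := intervalIntegral.integral_eq_sub_of_hasDeriv_right_of_le hw
    (f := J) (f' := rD J) ((hJ.continuousOn isOpen_univ).mono (subset_univ _))
    (fun x _ => hJ.hasDerivWithinAt_rightDeriv_of_mem_interior (by simp)) hi
  rw [hz, sub_zero] at h1
  rw [← h1, intervalIntegral.integral_of_le hw, ofReal_integral_eq_lintegral_ofReal hi.1]
  · exact setLIntegral_congr Ioo_ae_eq_Ioc
  · rw [EventuallyLE, ae_restrict_iff' measurableSet_Ioc]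
    exact Eventually.of_forall fun x hx => rD_nonneg hJ h0 hz hx.1.le

/-- pieces of a convex function -/
noncomputable def kap (J : ℝ → ℝ) (s w : ℝ) : ℝ≥0∞ := volume {r | (0 < r ∧ r < w) ∧ s < rD J r}

lemma measurable_kap {J : ℝ → ℝ} (hJ : ConvexOn ℝ univ J) :
    Measurable fun p : ℝ × ℝ => kap J p.1 p.2 := by
  have hD : Measurable (rD J) := (rD_mono hJ).measurable
  have : MeasurableSet {q : (ℝ × ℝ) × ℝ | (0 < q.2 ∧ q.2 < q.1.2) ∧ q.1.1 < rD J q.2} := by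
    refine MeasurableSet.inter (MeasurableSet.inter ?_ ?_) ?_
    · exact measurableSet_lt measurable_const measurable_snd
    · exact measurableSet_lt measurable_snd measurable_fst.snd
    · exact measurableSet_lt measurable_fst.fst (hD.comp measurable_snd)
  exact measurable_measure_prodMk_left this

lemma kap_cases {J : ℝ → ℝ} (hJ : ConvexOn ℝ univ J) (s : ℝ) :
    (∀ w, kap J s w = 0) ∨ ∃ σ, 0 ≤ σ ∧ ∀ w, kap J s w = ENNReal.ofReal (w - σ) := by
  set S := {r | 0 < r ∧ s < rD J r} with hS
  rcases S.eq_empty_or_nonempty with h | h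
  · left
    intro w
    have : {r | (0 < r ∧ r < w) ∧ s < rD J r} = ∅ := by
      rw [eq_empty_iff_forall_notMem]
      rintro r ⟨⟨h1, h2⟩, h3⟩
      have : r ∈ S := ⟨h1, h3⟩
      rw [h] at this
      exact this
    rw [kap, this, measure_empty]
  · right
    have hb : BddBelow S := ⟨0, fun r hr => hr.1.le⟩
    refine ⟨sInf S, Real.sInf_nonneg fun r hr => hr.1.le, fun w => ?_⟩
    apply le_antisymm
    · have : {r | (0 < r ∧ r < w) ∧ s < rD J r} ⊆ Ico (sInf S) w := by
        rintro r ⟨⟨h1, h2⟩, h3⟩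
        exact ⟨csInf_le hb ⟨h1, h3⟩, h2⟩
      exact (measure_mono this).trans_eq (by rw [Real.volume_Ico])
    · have : Ioo (sInf S) w ⊆ {r | (0 < r ∧ r < w) ∧ s < rD J r} := by
        rintro r ⟨h1, h2⟩
        obtain ⟨q, hq, hqr⟩ := exists_lt_of_csInf_lt h h1
        exact ⟨⟨hq.1.trans hqr, h2⟩, hq.2.trans_le (rD_mono hJ hqr.le)⟩
      exact (measure_mono this).trans_eq' (by rw [Real.volume_Ioo])

lemma lintegral_kap {J : ℝ → ℝ} (hJ : ConvexOn ℝ univ J) (h0 : ∀ t, 0 ≤ J t) (hz : J 0 = 0)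
    (w : ℝ) : ∫⁻ s in Ioi (0 : ℝ), kap J s w = if 0 ≤ w then ENNReal.ofReal (J w) else 0 := by
  split_ifs with hw
  · rw [← rD_integral hJ h0 hz hw, lintegral_eq_lintegral_meas_lt]
    · refine lintegral_congr fun s => ?_
      rw [Measure.restrict_apply
        (measurableSet_lt measurable_const (rD_mono hJ).measurable), kap]
      congr 1
      ext r
      simp only [mem_setOf_eq, mem_inter_iff, mem_Ioo]
      tauto
    · rw [EventuallyLE, ae_restrict_iff' measurableSet_Ioo]
      exact Eventually.of_forall fun x hx => rD_nonneg hJ h0 hz hx.1.le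
    · exact (rD_mono hJ).measurable.aemeasurable
  · have : ∀ s, kap J s w = 0 := by
      intro s
      rw [kap]
      have : {r | (0 < r ∧ r < w) ∧ s < rD J r} = ∅ := by
        rw [eq_empty_iff_forall_notMem]
        rintro r ⟨⟨h1, h2⟩, h3⟩
        linarith
      rw [this, measure_empty]
    simp [this]

/-- the one-sided part -/
noncomputable def KK (J : ℝ → ℝ) (w : ℝ) : ℝ≥0∞ := ∫⁻ s in Ioi (0 : ℝ), kap J s w

lemma measurable_KK {J : ℝ → ℝ} (hJ : ConvexOn ℝ univ J) : Measurable (KK J) :=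
  ((measurable_kap hJ).comp measurable_swap).lintegral_prod_right'

lemma convex_neg {J : ℝ → ℝ} (hJ : ConvexOn ℝ univ J) : ConvexOn ℝ univ (fun t => J (-t)) := by
  have := hJ.comp_linearMap (-LinearMap.id : ℝ →ₗ[ℝ] ℝ)
  simpa [Function.comp_def] using this

lemma KK_split {J : ℝ → ℝ} (hJ : ConvexOn ℝ univ J) (h0 : ∀ t, 0 ≤ J t) (hz : J 0 = 0) (w : ℝ) :
    ENNReal.ofReal (J w) = KK J w + KK (fun t => J (-t)) (-w) := by
  unfold KK
  rw [lintegral_kap hJ h0 hz, lintegral_kap (convex_neg hJ) (fun t => h0 _) (by simpa using hz)]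
  rcases lt_trichotomy w 0 with h | h | h
  · simp [h.le, not_le.2 h]
  · simp [h, hz]
  · simp [h.le, not_le.2 h]

section fin
variable {m : ℕ}

lemma KK_swap {J : ℝ → ℝ} (hJ : ConvexOn ℝ univ J)
    {u v g : EuclideanSpace ℝ (Fin (m + 1)) → ℝ} (hu : Measurable u)
    (hv : Measurable v) (hg : Measurable g) :
    ∫⁻ x, ∫⁻ y, KK J (u x - v y) * ENNReal.ofReal (g (x - y)) =
    ∫⁻ s in Ioi (0 : ℝ), ∫⁻ x, ∫⁻ y, kap J s (u x - v y) * ENNReal.ofReal (g (x - y)) := by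
  rw [← swap3]
  · refine lintegral_congr fun x => lintegral_congr fun y => ?_
    rw [lintegral_mul_const, KK]
    exact (measurable_kap hJ).comp (measurable_id.prodMk measurable_const)
  · refine Measurable.mul ((measurable_kap hJ).comp (measurable_snd.snd.prodMk ?_)) ?_
    · fun_prop
    · fun_prop

lemma KK_le {J : ℝ → ℝ} (hJ : ConvexOn ℝ univ J)
    {u v g : EuclideanSpace ℝ (Fin (m + 1)) → ℝ} (hu : Measurable u)
    (hv : Measurable v) (hg : Measurable g) (hu0 : ∀ x, 0 ≤ u x) (hv0 : ∀ x, 0 ≤ v x)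
    (hg0 : ∀ x, 0 ≤ g x)
    (fu : ∀ t, 0 < t → volume (lev u t) ≠ ⊤) (fv : ∀ t, 0 < t → volume (lev v t) ≠ ⊤)
    (fg : ∀ t, 0 < t → volume (lev g t) ≠ ⊤) (hgi : ∫⁻ z, ENNReal.ofReal (g z) ≠ ⊤) :
    ∫⁻ x, ∫⁻ y, KK J (schwarzRearr (m + 1) u x - schwarzRearr (m + 1) v y) *
        ENNReal.ofReal (schwarzRearr (m + 1) g (x - y)) ≤
    ∫⁻ x, ∫⁻ y, KK J (u x - v y) * ENNReal.ofReal (g (x - y)) := by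
  rw [KK_swap hJ hu hv hg, KK_swap hJ (measurable_schwarzRearr u) (measurable_schwarzRearr v)
    (measurable_schwarzRearr g)]
  refine lintegral_mono fun s => ?_
  rcases kap_cases hJ s with h | ⟨σ, hσ, h⟩
  · simp [h]
  · simp only [h]
    exact MM_le hσ hu hv hg hu0 hv0 hg0 fu fv fg hgi

lemma schwarzRearr_congr {g g' : EuclideanSpace ℝ (Fin (m + 1)) → ℝ}
    (h : ∀ t, volume (lev g t) = volume (lev g' t)) :
    schwarzRearr (m + 1) g = schwarzRearr (m + 1) g' := by
  ext x
  rw [schwarzRearr_eq, schwarzRearr_eq]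
  simp only [schwarzSet, schwarzRadius, h]

lemma schwarzRearr_neg_fun (g : EuclideanSpace ℝ (Fin (m + 1)) → ℝ) :
    schwarzRearr (m + 1) (fun z => g (-z)) = schwarzRearr (m + 1) g := by
  apply schwarzRearr_congr
  intro t
  rw [← Measure.measure_preimage_neg volume (lev g t)]
  rfl

lemma schwarzRearr_even (g : EuclideanSpace ℝ (Fin (m + 1)) → ℝ)
    (x : EuclideanSpace ℝ (Fin (m + 1))) :
    schwarzRearr (m + 1) g (-x) = schwarzRearr (m + 1) g x := by
  rw [schwarzRearr_eq, schwarzRearr_eq]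
  simp [schwarzSet]

lemma split_eq {J : ℝ → ℝ} (hJ : ConvexOn ℝ univ J) (h0 : ∀ t, 0 ≤ J t) (hz : J 0 = 0)
    {u v g : EuclideanSpace ℝ (Fin (m + 1)) → ℝ} (hu : Measurable u)
    (hv : Measurable v) (hg : Measurable g) :
    ∫⁻ x, ∫⁻ y, ENNReal.ofReal (J (u x - v y) * g (x - y)) =
      (∫⁻ x, ∫⁻ y, KK J (u x - v y) * ENNReal.ofReal (g (x - y))) +
      ∫⁻ x, ∫⁻ y, KK (fun t => J (-t)) (v x - u y) * ENNReal.ofReal (g (-(x - y))) := by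
  have mK := measurable_KK hJ
  have mK' := measurable_KK (convex_neg hJ)
  have m1 : Measurable fun p : EuclideanSpace ℝ (Fin (m + 1)) × EuclideanSpace ℝ (Fin (m + 1)) =>
      KK J (u p.1 - v p.2) * ENNReal.ofReal (g (p.1 - p.2)) := by fun_prop
  have m2 : Measurable fun p : EuclideanSpace ℝ (Fin (m + 1)) × EuclideanSpace ℝ (Fin (m + 1)) =>
      KK (fun t => J (-t)) (v p.1 - u p.2) * ENNReal.ofReal (g (-(p.1 - p.2))) := by fun_prop
  rw [lintegral_lintegral_swap (f := fun x y => KK (fun t => J (-t)) (v x - u y) *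
    ENNReal.ofReal (g (-(x - y)))) m2.aemeasurable, ← lintegral_add_left m1.lintegral_prod_right']
  refine lintegral_congr fun x => ?_
  simp only
  rw [← lintegral_add_left (by fun_prop)]
  refine lintegral_congr fun y => ?_
  rw [ENNReal.ofReal_mul (h0 _), KK_split hJ h0 hz, add_mul]
  simp

/-- The main inequality for measurable `g`. -/
lemma main_measurable {J : ℝ → ℝ} (hJ : ConvexOn ℝ univ J) (h0 : ∀ t, 0 ≤ J t) (hz : J 0 = 0)
    {u v g : EuclideanSpace ℝ (Fin (m + 1)) → ℝ} (hu : Measurable u)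
    (hv : Measurable v) (hg : Measurable g) (hu0 : ∀ x, 0 ≤ u x) (hv0 : ∀ x, 0 ≤ v x)
    (hg0 : ∀ x, 0 ≤ g x)
    (fu : ∀ t, 0 < t → volume (lev u t) ≠ ⊤) (fv : ∀ t, 0 < t → volume (lev v t) ≠ ⊤)
    (fg : ∀ t, 0 < t → volume (lev g t) ≠ ⊤) (hgi : ∫⁻ z, ENNReal.ofReal (g z) ≠ ⊤) :
    ∫⁻ x, ∫⁻ y, ENNReal.ofReal (J (schwarzRearr (m + 1) u x - schwarzRearr (m + 1) v y) *
        schwarzRearr (m + 1) g (x - y)) ≤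
    ∫⁻ x, ∫⁻ y, ENNReal.ofReal (J (u x - v y) * g (x - y)) := by
  rw [split_eq hJ h0 hz hu hv hg, split_eq hJ h0 hz (measurable_schwarzRearr u)
    (measurable_schwarzRearr v) (measurable_schwarzRearr g)]
  refine add_le_add (KK_le hJ hu hv hg hu0 hv0 hg0 fu fv fg hgi) ?_
  have := KK_le (g := fun z => g (-z)) (convex_neg hJ) hv hu (by fun_prop) hv0 hu0
    (fun _ => hg0 _) fv fu (by
      intro t ht
      have h := fg t ht
      rw [← Measure.measure_preimage_neg volume (lev g t)] at h
      exact h) (by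
      rw [lintegral_neg_eq_self (fun z => ENNReal.ofReal (g z))]; exact hgi)
  rw [schwarzRearr_neg_fun] at this
  simp only [schwarzRearr_even]
  exact this

end fin

theorem stmt_0 (n : ℕ) (hn : 1 ≤ n)
    (J : ℝ → ℝ) (hJnonneg : ∀ t, 0 ≤ J t) (hJconv : ConvexOn ℝ Set.univ J) (hJ0 : J 0 = 0)
    (g : EuclideanSpace ℝ (Fin n) → ℝ) (hgint : Integrable g) (hgnonneg : ∀ x, 0 ≤ g x)
    (u v : EuclideanSpace ℝ (Fin n) → ℝ) (hu : Measurable u) (hv : Measurable v)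
    (hu0 : ∀ x, 0 ≤ u x) (hv0 : ∀ x, 0 ≤ v x)
    (huτ : ∀ τ : ℝ, 0 < τ → volume {x | τ < u x} < ⊤)
    (hvτ : ∀ τ : ℝ, 0 < τ → volume {x | τ < v x} < ⊤)
    (hfin : (∫⁻ x : EuclideanSpace ℝ (Fin n), ∫⁻ y : EuclideanSpace ℝ (Fin n),
        ENNReal.ofReal (J (u x - v y) * g (x - y))) ≠ ⊤) :
    (∫⁻ x : EuclideanSpace ℝ (Fin n), ∫⁻ y : EuclideanSpace ℝ (Fin n),
        ENNReal.ofReal (J (schwarzRearr n u x - schwarzRearr n v y) *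
          schwarzRearr n g (x - y))) ≤
      ∫⁻ x : EuclideanSpace ℝ (Fin n), ∫⁻ y : EuclideanSpace ℝ (Fin n),
        ENNReal.ofReal (J (u x - v y) * g (x - y)) := by
  obtain ⟨m, rfl⟩ : ∃ m, n = m + 1 := ⟨n - 1, by omega⟩
  have hgm := hgint.1.stronglyMeasurable_mk.measurable
  have hae := hgint.1.ae_eq_mk
  set g1 : EuclideanSpace ℝ (Fin (m + 1)) → ℝ := fun z => |hgint.1.mk g z| with hg1
  have hg1m : Measurable g1 := hgm.norm
  have hg1ae : ∀ᵐ z, g z = g1 z := by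
    filter_upwards [hae] with z hz
    rw [hg1]
    simp only
    rw [← hz, abs_of_nonneg (hgnonneg z)]
  have hg10 : ∀ z, 0 ≤ g1 z := fun z => abs_nonneg _
  have hlev : ∀ t, volume (lev g t) = volume (lev g1 t) := by
    intro t
    apply measure_congr
    filter_upwards [hg1ae] with z hz
    refine propext (show t < |g z| ↔ t < |g1 z| from ?_)
    rw [hz]
  have hg1i : Integrable g1 := hgint.congr hg1ae
  have e : ∫⁻ x, ∫⁻ y, ENNReal.ofReal (J (u x - v y) * g (x - y)) =
      ∫⁻ x, ∫⁻ y, ENNReal.ofReal (J (u x - v y) * g1 (x - y)) := by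
    refine lintegral_congr fun x => lintegral_congr_ae ?_
    filter_upwards [ae_sub hg1ae x] with y hy
    rw [hy]
  rw [e, schwarzRearr_congr hlev]
  refine main_measurable hJconv hJnonneg hJ0 hu hv hg1m hu0 hv0 hg10 ?_ ?_ ?_ ?_
  · intro t ht; rw [lev_eq hu0]; exact (huτ t ht).ne
  · intro t ht; rw [lev_eq hv0]; exact (hvτ t ht).ne
  · intro t ht; rw [lev_eq hg10]; exact (hg1i.measure_gt_lt_top ht).ne
  · rw [← ofReal_integral_eq_lintegral_ofReal hg1i (Eventually.of_forall hg10)]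
    exact ENNReal.ofReal_ne_top
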